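/- Let 1/2 < γ ≤ 1 and let A : ℝ³ → ℝ³⊗ℝ³ satisfy ‖∇A‖_2 < ∞. Fix r > 0, let ℬ(𝒞^γ; r) be the open ball of radius r centered at zero in 𝒞^γ, let T₀ = T₀(r) be the common existence time of solutions of the vortex filament equation Y(t)_ξ = X_ξ + ∫_0^t V^{Y(s)}(Y(s)_ξ) ds for initial conditions X ∈ ℬ(𝒞^γ; r), and let Γ : ℬ(𝒞^γ; r) → C([0,T₀], 𝒞^γ) be the solution map X ↦ Y. Then Γ is Lipschitz continuous: there is a constant L (depending on r, ‖∇A‖_2, γ) such that ‖Γ(X) − Γ(X̃)‖_{𝐗_{T₀}} ≤ L ‖X − X̃‖_γ^* for all X, X̃ ∈ ℬ(𝒞^γ; r). -/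

import Mathlib

/-! The vortex filament equation is treated as an ordinary differential equation
`dY/dt = V^Y(Y)` in the Banach space `𝒞^γ`.

The Loève–Young estimate `norm_rsSum_sub_le` shows that left-point sums of `∫ f dg` converge for
`γ`-Hölder `f`, `g` with `γ > 1/2`, and that for a closed integrator the integral is bounded by the
product of the two Hölder seminorms (`norm_young_le`). Applied to `f = A (Z_ξ - Z_·)`, to its
increments in `ξ`, and to the differences of these for two curves `Z`, `W`, it shows that
`Z ↦ V^Z(Z)` maps `𝒞^γ` to itself, and is bounded (`norm_velMap_le`) and Lipschitz
(`norm_velMap_sub_le`) on balls. The increments of the difference for two curves are the delicate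
term: they are rectangular increments of `A (x - z)` along two configurations of points, and
controlling them takes the three bounded derivatives of `A` (`KernelBound.eight_point`).

Let `B` bound the vector field on the ball of radius `r + 1`. Picard–Lindelöf gives, for each
initial condition of norm at most `r`, a trajectory on `[0, 1 / (B + 1)]` that stays in this ball
(`exists_isTraj`). Solutions in the Young sense are the same as trajectories in the Banach space
(`IsYoungSolution.exists_isTraj`, `IsTraj.isYoungSolution`), so by uniqueness every solution stays
in the ball of radius `r + 1`, and Gronwall's lemma bounds the difference of two of them. The
Lipschitz constant is `2 exp (Λ T)`, with `Λ` the Lipschitz constant of the vector field on the ball: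
the norm of the Banach space is `max ‖X‖_∞ ‖X‖_γ`, whence the factor `2` in comparison with
`‖X‖_γ^* = ‖X‖_∞ + ‖X‖_γ`. -/

/- Common framework: Hölder curves on [0,1], Riemann–Stieltjes/Young/rough integrals as
limits of (compensated) partition sums, controlled paths, and covariations. -/

noncomputable section

open Set Filter Topology MeasureTheory
open scoped ENNReal

/-- Three dimensional Euclidean space. -/
abbrev E3 : Type := EuclideanSpace ℝ (Fin 3)

/-- `ℝ³ ⊗ ℝ³`, realized as (continuous) linear endomorphisms of `ℝ³`. -/
abbrev M3 : Type := E3 →L[ℝ] E3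

/-- Outer (tensor) product `a ⊗ b` of two vectors, as the linear map `v ↦ ⟪b, v⟫ • a`. -/
def oProd (a b : E3) : M3 := (innerSL ℝ b).smulRight a

/-- The canonical basis vectors of `ℝ³`. -/
def e3 (k : Fin 3) : E3 := EuclideanSpace.single k 1

/-- The `i`-th component of a vector of `ℝ³`. -/
def ecomp (i : Fin 3) (v : E3) : ℝ := @inner ℝ _ _ (e3 i) v

/-- The `(i,k)` entry of a matrix. -/
def mentry (i k : Fin 3) (M : M3) : ℝ := ecomp i (M (e3 k))

/-- `γ`-Hölder seminorm `‖X‖_γ` over the interval `[0,1]`. -/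
def hSemi {F : Type*} [NormedAddCommGroup F] (γ : ℝ) (X : ℝ → F) : ℝ :=
  sSup {r | ∃ s ∈ Icc (0:ℝ) 1, ∃ t ∈ Icc (0:ℝ) 1, s ≠ t ∧ r = ‖X s - X t‖ / |s - t| ^ γ}

/-- Supremum norm `‖X‖_∞` over the interval `[0,1]`. -/
def sNorm {F : Type*} [NormedAddCommGroup F] (X : ℝ → F) : ℝ :=
  sSup {r | ∃ s ∈ Icc (0:ℝ) 1, r = ‖X s‖}

/-- The norm `‖X‖_γ^* = ‖X‖_∞ + ‖X‖_γ`. -/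
def hStar {F : Type*} [NormedAddCommGroup F] (γ : ℝ) (X : ℝ → F) : ℝ :=
  sNorm X + hSemi γ X

/-- `X` is `γ`-Hölder continuous on `[0,1]`. -/
def HolderOn {F : Type*} [NormedAddCommGroup F] (γ : ℝ) (X : ℝ → F) : Prop :=
  ∃ C : ℝ, ∀ s ∈ Icc (0:ℝ) 1, ∀ t ∈ Icc (0:ℝ) 1, ‖X s - X t‖ ≤ C * |s - t| ^ γ

/-- A closed continuous curve parametrized by `[0,1]`. -/
def ClosedCurve {F : Type*} [NormedAddCommGroup F] (X : ℝ → F) : Prop :=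
  ContinuousOn X (Icc (0:ℝ) 1) ∧ X 0 = X 1

/-- Membership in `𝒞^γ`: closed curve with finite `γ`-Hölder norm. -/
def MemC {F : Type*} [NormedAddCommGroup F] (γ : ℝ) (X : ℝ → F) : Prop :=
  ClosedCurve X ∧ HolderOn γ X

/-- A partition `a = t 0 ≤ t 1 ≤ ⋯ ≤ t n = b` of the interval `[a,b]`. -/
structure Ptn (a b : ℝ) where
  n : ℕ
  t : ℕ → ℝ
  first : t 0 = a
  last : t n = b
  mono : ∀ i < n, t i ≤ t (i + 1)

/-- The mesh of the partition is at most `δ`. -/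
def Ptn.MeshLE {a b : ℝ} (P : Ptn a b) (δ : ℝ) : Prop :=
  ∀ i < P.n, P.t (i + 1) - P.t i ≤ δ

/-- `I` is the limit of the partition sums `S P` as the mesh of `P` tends to zero. -/
def RSLimit {F : Type*} [NormedAddCommGroup F] (a b : ℝ) (S : Ptn a b → F) (I : F) : Prop :=
  ∀ ε > 0, ∃ δ > 0, ∀ P : Ptn a b, P.MeshLE δ → ‖S P - I‖ ≤ ε

/-- `‖∇^j φ‖ = sup_x ‖∇^j φ(x)‖`. -/
def tnorm {F : Type*} [NormedAddCommGroup F] [NormedSpace ℝ F] (j : ℕ) (φ : E3 → F) : ℝ :=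
  sSup (Set.range fun x => ‖iteratedFDeriv ℝ j φ x‖)

/-- `‖∇^m φ‖_n = Σ_{k=0}^n ‖∇^{m+k} φ‖`. -/
def nablaNorm {F : Type*} [NormedAddCommGroup F] [NormedSpace ℝ F]
    (m n : ℕ) (φ : E3 → F) : ℝ :=
  ∑ k ∈ Finset.range (n + 1), tnorm (m + k) φ

/-- `‖∇^m φ‖_n < ∞` : `φ` is `(m+n)` times continuously differentiable with
`sup_x ‖∇^k φ(x)‖ < ∞` for every `m ≤ k ≤ m+n`. -/
def NablaBdd {F : Type*} [NormedAddCommGroup F] [NormedSpace ℝ F] (m n : ℕ) (φ : E3 → F) : Prop :=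
  ContDiff ℝ (m + n) φ ∧
    ∀ k : ℕ, m ≤ k → k ≤ m + n → BddAbove (Set.range fun x => ‖iteratedFDeriv ℝ k φ x‖)

/-- Riemann–Stieltjes sum for the line integral `∫_0^1 A(x - Z_η) dZ_η`. -/
def youngRS (A : E3 → M3) (Z : ℝ → E3) (x : E3) {a b : ℝ} (P : Ptn a b) : E3 :=
  ∑ i ∈ Finset.range P.n, A (x - Z (P.t i)) (Z (P.t (i + 1)) - Z (P.t i))

/-- `V = V^Z` is the Young velocity field `V^Z(x) = ∫_0^1 A(x - Z_η) dZ_η`, each value being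
the limit of Riemann–Stieltjes sums. -/
def IsYoungVelocity (A : E3 → M3) (Z : ℝ → E3) (V : E3 → E3) : Prop :=
  ∀ x : E3, RSLimit 0 1 (fun P => youngRS A Z x P) (V x)

/-- `C` is a constant realizing the Young estimate
`|∫_η^ξ (X_ρ - X_η) ⊗ dY_ρ| ≤ C ‖X‖_γ ‖Y‖_γ |ξ - η|^{2γ}`. -/
def YoungEstimate (γ C : ℝ) : Prop :=
  ∀ X Y : ℝ → E3, HolderOn γ X → HolderOn γ Y →
    ∀ η ∈ Icc (0:ℝ) 1, ∀ ξ ∈ Icc (0:ℝ) 1, η ≤ ξ →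
      ∀ I : M3,
        RSLimit η ξ (fun P => ∑ i ∈ Finset.range P.n,
          oProd (X (P.t i) - X η) (Y (P.t (i + 1)) - Y (P.t i))) I →
        ‖I‖ ≤ C * hSemi γ X * hSemi γ Y * (ξ - η) ^ (2 * γ)

/-- Continuity of `t ↦ Y(t)` from `[0,T]` into `𝒞^γ` (with the norm `‖·‖_γ^*`). -/
def ContXT (γ T : ℝ) (Y : ℝ → ℝ → E3) : Prop :=
  ∀ t ∈ Icc 0 T, ∀ ε > 0, ∃ δ > 0, ∀ s ∈ Icc 0 T, |s - t| ≤ δ →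
    hStar γ (fun ξ => Y s ξ - Y t ξ) ≤ ε

/-- The norm `‖Y‖_{𝐗_T} = sup_{t ∈ [0,T]} ‖Y(t)‖_γ^*`. -/
def xnorm (γ T : ℝ) (Y : ℝ → ℝ → E3) : ℝ :=
  sSup {r | ∃ t ∈ Icc 0 T, r = hStar γ (Y t)}

/-- Membership in `𝐗_T = C([0,T], 𝒞^γ)`. -/
def MemXT (γ T : ℝ) (Y : ℝ → ℝ → E3) : Prop :=
  (∀ t ∈ Icc 0 T, MemC γ (Y t)) ∧ ContXT γ T Y

/-- The map `F(Y)(t)_ξ = X_ξ + ∫_0^t v_s(Y(s)_ξ) ds`. -/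
def Fmap (X : ℝ → E3) (v : ℝ → E3 → E3) (Y : ℝ → ℝ → E3) : ℝ → ℝ → E3 :=
  fun t ξ => X ξ + ∫ s in (0:ℝ)..t, v s (Y s ξ)

/-- The controlled derivative of `F(Y)`:
`F(Y)'(t)_ξ = Id + ∫_0^t ∇v_s(Y(s)_ξ) ∘ Y'(s)_ξ ds`. -/
def Fmap' (v : ℝ → E3 → E3) (Y : ℝ → ℝ → E3) (Y' : ℝ → ℝ → M3) : ℝ → ℝ → M3 :=
  fun t ξ => ContinuousLinearMap.id ℝ E3
    + ∫ s in (0:ℝ)..t, (fderiv ℝ (v s) (Y s ξ)).comp (Y' s ξ)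

/-- `Y` solves the vortex filament equation on `[0,T]` with initial condition `X`,
the velocity fields being given by Young line integrals. -/
def IsYoungSolution (T : ℝ) (A : E3 → M3) (X : ℝ → E3) (Y : ℝ → ℝ → E3) : Prop :=
  ∃ v : ℝ → E3 → E3, (∀ s ∈ Icc 0 T, IsYoungVelocity A (Y s) (v s)) ∧
    ∀ t ∈ Icc 0 T, ∀ ξ ∈ Icc (0:ℝ) 1, Y t ξ = X ξ + ∫ s in (0:ℝ)..t, v s (Y s ξ)

/-- The same, on the half open interval `[0,T)`. -/
def IsYoungSolutionLt (T : ℝ) (A : E3 → M3) (X : ℝ → E3) (Y : ℝ → ℝ → E3) : Prop :=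
  ∃ v : ℝ → E3 → E3, (∀ s ∈ Ico 0 T, IsYoungVelocity A (Y s) (v s)) ∧
    ∀ t ∈ Ico 0 T, ∀ ξ ∈ Icc (0:ℝ) 1, Y t ξ = X ξ + ∫ s in (0:ℝ)..t, v s (Y s ξ)

/-- `β`-Hölder norm of a two-parameter function on `[0,1]²` (vanishing on the diagonal). -/
def rnorm {F : Type*} [NormedAddCommGroup F] (β : ℝ) (W : ℝ → ℝ → F) : ℝ :=
  sSup {r | ∃ s ∈ Icc (0:ℝ) 1, ∃ t ∈ Icc (0:ℝ) 1, s ≠ t ∧ r = ‖W s t‖ / |s - t| ^ β}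

/-- Finiteness of the `β`-Hölder norm of a two-parameter function. -/
def RBddOn {F : Type*} [NormedAddCommGroup F] (β : ℝ) (W : ℝ → ℝ → F) : Prop :=
  ∃ C : ℝ, ∀ s ∈ Icc (0:ℝ) 1, ∀ t ∈ Icc (0:ℝ) 1, ‖W s t‖ ≤ C * |s - t| ^ β

/-- `(X, 𝕏²)` is a `γ`-rough path: `X` is `γ`-Hölder, the area process `𝕏²` is continuous,
satisfies the compatibility (Chen) relation and has finite `2γ`-Hölder norm. -/
structure IsRoughPath (γ : ℝ) (X : ℝ → E3) (XX : ℝ → ℝ → M3) : Prop where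
  cont : ContinuousOn X (Icc (0:ℝ) 1)
  holder : HolderOn γ X
  cont2 : ContinuousOn (fun p : ℝ × ℝ => XX p.1 p.2) (Icc (0:ℝ) 1 ×ˢ Icc (0:ℝ) 1)
  chen : ∀ ξ ∈ Icc (0:ℝ) 1, ∀ η ∈ Icc (0:ℝ) 1, ∀ ρ ∈ Icc (0:ℝ) 1,
    XX ξ ρ - XX ξ η - XX η ρ = oProd (X ξ - X η) (X η - X ρ)
  bdd : RBddOn (2 * γ) XX

/-- Remainder `R^Y_{ηξ} = Y_ξ - Y_η - Y'_η (X_ξ - X_η)` of a controlled path. -/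
def ctrlRem (X Y : ℝ → E3) (Y' : ℝ → M3) (η ξ : ℝ) : E3 :=
  Y ξ - Y η - Y' η (X ξ - X η)

/-- `(Y, Y')` is a (closed) path weakly controlled by `X`, i.e. `Y ∈ 𝒟_X`. -/
structure IsControlled (γ : ℝ) (X Y : ℝ → E3) (Y' : ℝ → M3) : Prop where
  closed : Y 0 = Y 1
  cont : ContinuousOn Y (Icc (0:ℝ) 1)
  contD : ContinuousOn Y' (Icc (0:ℝ) 1)
  holderD : HolderOn γ Y'
  rem : RBddOn (2 * γ) (fun η ξ => ctrlRem X Y Y' η ξ)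

/-- The norm `‖Y‖_D = ‖Y'‖_γ + ‖R^Y‖_{2γ} + ‖Y'‖_∞` on `𝒟_X`. -/
def dnorm (γ : ℝ) (X Y : ℝ → E3) (Y' : ℝ → M3) : ℝ :=
  hSemi γ Y' + rnorm (2 * γ) (fun η ξ => ctrlRem X Y Y' η ξ) + sNorm Y'

/-- The norm `‖Y‖_D^* = ‖Y‖_D + ‖Y‖_∞`. -/
def dnormStar (γ : ℝ) (X Y : ℝ → E3) (Y' : ℝ → M3) : ℝ :=
  dnorm γ X Y Y' + sNorm Y

/-- The constant `C_X = 1 + ‖X‖_γ + ‖𝕏²‖_{2γ}`. -/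
def CXconst (γ : ℝ) (X : ℝ → E3) (XX : ℝ → ℝ → M3) : ℝ :=
  1 + hSemi γ X + rnorm (2 * γ) XX

/-- The compensator `P W Qᵀ` (matrix product), i.e. `(P W Qᵀ)^{ij} = P^{ik} W^{kl} Q^{jl}`. -/
def ctrlComp (P Q W : M3) : M3 := P ∘L W ∘L (ContinuousLinearMap.adjoint Q)

/-- Compensated Riemann sum
`Σ_i [ Y_{t_i} ⊗ (Z_{t_{i+1}} - Z_{t_i}) + Y'_{t_i} Z'_{t_i} 𝕏²_{t_{i+1} t_i} ]`
for the rough integral `∫ Y ⊗ dZ` of two weakly controlled paths. -/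
def roughPairRS (XX : ℝ → ℝ → M3) (Y Z : ℝ → E3) (Y' Z' : ℝ → M3)
    {a b : ℝ} (P : Ptn a b) : M3 :=
  ∑ i ∈ Finset.range P.n,
    (oProd (Y (P.t i)) (Z (P.t (i + 1)) - Z (P.t i))
      + ctrlComp (Y' (P.t i)) (Z' (P.t i)) (XX (P.t (i + 1)) (P.t i)))

/-- The contraction `Σ_{k,l} W^{kl} (W'(e_k))(Z'(e_l))`, the compensator of a matrix-valued
controlled integrand `W` (with controlled derivative `W'`) against `dZ`. -/
def comp2 (W' : E3 →L[ℝ] M3) (Z' : M3) (W : M3) : E3 :=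
  ∑ k : Fin 3, ∑ l : Fin 3, ecomp k (W (e3 l)) • (W' (e3 k)) (Z' (e3 l))

/-- Compensated Riemann sum for the rough line integral `∫_0^1 A(x - Z_η) dZ_η` along a path
`Z` weakly controlled by `X`, the integrand `η ↦ A(x - Z_η)` having controlled derivative
`-∇A(x - Z_η) ∘ Z'_η`. -/
def roughVelRS (A : E3 → M3) (XX : ℝ → ℝ → M3) (Z : ℝ → E3) (Z' : ℝ → M3)
    (x : E3) {a b : ℝ} (P : Ptn a b) : E3 :=
  ∑ i ∈ Finset.range P.n,
    (A (x - Z (P.t i)) (Z (P.t (i + 1)) - Z (P.t i))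
      + comp2 (-((fderiv ℝ A (x - Z (P.t i))).comp (Z' (P.t i)))) (Z' (P.t i))
          (XX (P.t (i + 1)) (P.t i)))

/-- `V = V^Z` is the rough velocity field `V^Z(x) = ∫_0^1 A(x - Z_η) dZ_η`, each value being
the limit of compensated Riemann sums. -/
def IsRoughVelocity (A : E3 → M3) (XX : ℝ → ℝ → M3) (Z : ℝ → E3) (Z' : ℝ → M3)
    (V : E3 → E3) : Prop :=
  ∀ x : E3, RSLimit 0 1 (fun P => roughVelRS A XX Z Z' x P) (V x)

/-- Continuity of `t ↦ (Y(t), Y'(t))` from `[0,T]` into `𝒟_X` (with the norm `‖·‖_D^*`). -/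
def ContDT (γ T : ℝ) (X : ℝ → E3) (Y : ℝ → ℝ → E3) (Y' : ℝ → ℝ → M3) : Prop :=
  ∀ t ∈ Icc 0 T, ∀ ε > 0, ∃ δ > 0, ∀ s ∈ Icc 0 T, |s - t| ≤ δ →
    dnormStar γ X (fun ξ => Y s ξ - Y t ξ) (fun ξ => Y' s ξ - Y' t ξ) ≤ ε

/-- Membership in `𝐃_{X,T} = C([0,T], 𝒟_X)`. -/
def MemDT (γ T : ℝ) (X : ℝ → E3) (Y : ℝ → ℝ → E3) (Y' : ℝ → ℝ → M3) : Prop :=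
  (∀ t ∈ Icc 0 T, IsControlled γ X (Y t) (Y' t)) ∧ ContDT γ T X Y Y'

/-- The norm `‖Y‖_{𝐃_{X,T}} = sup_{t ∈ [0,T]} ‖Y(t)‖_D^*`. -/
def dxnorm (γ T : ℝ) (X : ℝ → E3) (Y : ℝ → ℝ → E3) (Y' : ℝ → ℝ → M3) : ℝ :=
  sSup {r | ∃ t ∈ Icc 0 T, r = dnormStar γ X (Y t) (Y' t)}

/-- `(Y, Y')` solves the vortex filament equation on `[0,T]` with initial condition `X`,
the velocity fields being given by rough line integrals over the rough path `(X, 𝕏²)`. -/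
def IsRoughSolution (T : ℝ) (A : E3 → M3) (X : ℝ → E3) (XX : ℝ → ℝ → M3)
    (Y : ℝ → ℝ → E3) (Y' : ℝ → ℝ → M3) : Prop :=
  ∃ v : ℝ → E3 → E3,
    (∀ s ∈ Icc 0 T, IsRoughVelocity A XX (Y s) (Y' s) (v s)) ∧
    (∀ t ∈ Icc 0 T, ∀ ξ ∈ Icc (0:ℝ) 1, Y t ξ = X ξ + ∫ s in (0:ℝ)..t, v s (Y s ξ)) ∧
    (∀ t ∈ Icc 0 T, ∀ ξ ∈ Icc (0:ℝ) 1, Y' t ξ = Fmap' v Y Y' t ξ)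

/-- `YY` is the lift (area process) `𝕐²_{ab} = ∫_a^b (Y_η - Y_a) ⊗ dY_η` of the weakly
controlled path `(Y, Y')`, defined through compensated Riemann sums. -/
def IsLift (XX : ℝ → ℝ → M3) (Y : ℝ → E3) (Y' : ℝ → M3) (YY : ℝ → ℝ → M3) : Prop :=
  ∀ a ∈ Icc (0:ℝ) 1, ∀ b ∈ Icc (0:ℝ) 1, a ≤ b →
    RSLimit a b (fun P => ∑ i ∈ Finset.range P.n,
      (oProd (Y (P.t i) - Y a) (Y (P.t (i + 1)) - Y (P.t i))
        + ctrlComp (Y' (P.t i)) (Y' (P.t i)) (XX (P.t (i + 1)) (P.t i)))) (YY a b)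

/-- `ε`-approximation `ξ ↦ ∫_0^ξ (U_{ρ+ε} - U_ρ)(W_{ρ+ε} - W_ρ) dρ / ε` of the covariation
(the processes being extended by their value at `1`). -/
def covApprox (U W : ℝ → ℝ) (ε ξ : ℝ) : ℝ :=
  ∫ ρ in (0:ℝ)..ξ, (U (min (ρ + ε) 1) - U ρ) * (W (min (ρ + ε) 1) - W ρ) / ε

/-- `C = [U, W]` is the covariation of the processes `U` and `W`: the `ε`-approximations
converge uniformly in probability (ucp) as `ε → 0⁺`. -/
def HasCovariation {Ω : Type*} [MeasurableSpace Ω] (P : Measure Ω)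
    (U W : Ω → ℝ → ℝ) (C : Ω → ℝ → ℝ) : Prop :=
  ∀ δ : ℝ, 0 < δ →
    Tendsto (fun ε : ℝ =>
        P {ω | δ ≤ ⨆ ξ : Icc (0:ℝ) 1, |covApprox (U ω) (W ω) ε ξ.1 - C ω ξ.1|})
      (𝓝[>] (0:ℝ)) (𝓝 (0:ℝ≥0∞))

/-! ### The Loève–Young estimate for finite sums -/

/-- Left-point Riemann–Stieltjes sum `∑_{p ≤ i < q} f(t_i) (g(t_{i+1}) - g(t_i))` along a
sequence of points. -/
def rsSum (f : ℝ → M3) (g : ℝ → E3) (t : ℕ → ℝ) (p q : ℕ) : E3 :=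
  ∑ i ∈ Finset.Ico p q, f (t i) (g (t (i + 1)) - g (t i))

/-- `f` is `γ`-Hölder on the whole line with constant `C`. -/
def HolderC {F : Type*} [NormedAddCommGroup F] (γ C : ℝ) (f : ℝ → F) : Prop :=
  ∀ s t : ℝ, ‖f s - f t‖ ≤ C * |s - t| ^ γ

/-- The constant of the Young–Loève estimate: the solution of `κ = 2 ^ (1 - 2γ) κ + 2`. -/
def youngC (γ : ℝ) : ℝ := 2 / (1 - 2 ^ (1 - 2 * γ))

lemma two_rpow_lt {γ : ℝ} (hγ : 1 / 2 < γ) : (2:ℝ) ^ (1 - 2 * γ) < 1 :=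
  Real.rpow_lt_one_of_one_lt_of_neg (by norm_num) (by linarith)

lemma youngC_pos {γ : ℝ} (hγ : 1 / 2 < γ) : 0 < youngC γ :=
  div_pos two_pos (by linarith [two_rpow_lt hγ])

lemma youngC_eq {γ : ℝ} (hγ : 1 / 2 < γ) : youngC γ * 2 ^ (1 - 2 * γ) + 2 = youngC γ := by
  have := two_rpow_lt hγ
  have h : (1 - (2:ℝ) ^ (1 - 2 * γ)) ≠ 0 := by linarith
  unfold youngC
  field_simp
  ring

/-- A consecutive pair of points of the sequence which straddles the level `c`. -/
lemma exists_crossing (t : ℕ → ℝ) (c : ℝ) (p q : ℕ) (hpq : p < q) (h1 : t p ≤ c)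
    (h2 : c ≤ t q) : ∃ m, p ≤ m ∧ m < q ∧ t m ≤ c ∧ c ≤ t (m + 1) := by
  induction q, hpq using Nat.le_induction with
  | base => exact ⟨p, le_rfl, Nat.lt_succ_self _, h1, h2⟩
  | succ q hq ih =>
    by_cases h : c ≤ t q
    · obtain ⟨m, a, b, d⟩ := ih h
      exact ⟨m, a, by omega, d⟩
    · exact ⟨q, by omega, by omega, by linarith, h2⟩

/-- Loève–Young estimate for finite sums. The induction splits the sum at the interval which
contains the midpoint of `[t p, t q]`; both remaining pieces have at most half the length, and
`2γ > 1` makes the geometric recursion close. -/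
lemma norm_rsSum_sub_le {γ F G : ℝ} (hγ : 1 / 2 < γ) (hF : 0 ≤ F) (hG : 0 ≤ G) {f : ℝ → M3}
    {g : ℝ → E3} (hf : HolderC γ F f) (hg : HolderC γ G g) {t : ℕ → ℝ} (ht : Monotone t) :
    ∀ n p q : ℕ, q = p + n →
      ‖rsSum f g t p q - f (t p) (g (t q) - g (t p))‖ ≤
        youngC γ * F * G * (t q - t p) ^ (2 * γ) := by
  have hκ := youngC_pos hγ
  intro n
  induction n using Nat.strong_induction_on with
  | _ n ih =>
  intro p q hq
  have htpq : t p ≤ t q := ht (by omega)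
  rcases Nat.eq_zero_or_pos n with h0 | hpos
  · subst h0
    simp only [add_zero] at hq
    subst hq
    have : 0 ≤ (0:ℝ) ^ (2 * γ) := Real.rpow_nonneg le_rfl _
    simp [rsSum]
    positivity
  set ℓ : ℝ := t q - t p with hℓ
  have hℓ0 : 0 ≤ ℓ := by linarith
  obtain ⟨m, hpm, hmq, hm1, hm2⟩ := exists_crossing t ((t p + t q) / 2) p q (by omega)
    (by linarith) (by linarith)
  have b1 := ih (m - p) (by omega) p m (by omega)
  have b2 := ih (q - (m + 1)) (by omega) (m + 1) q (by omega)
  have hmm : t p ≤ t m := ht hpm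
  have hmm' : t m ≤ t (m + 1) := ht (Nat.le_succ m)
  have hmm'' : t (m + 1) ≤ t q := ht hmq
  have half : ∀ x : ℝ, 0 ≤ x → x ≤ ℓ / 2 → x ^ (2 * γ) ≤ (ℓ / 2) ^ (2 * γ) := fun x h h' =>
    Real.rpow_le_rpow h h' (by linarith)
  have hb1 := half (t m - t p) (by linarith) (by rw [hℓ]; linarith)
  have hb2 := half (t q - t (m + 1)) (by linarith) (by rw [hℓ]; linarith)
  have hdec : rsSum f g t p q - f (t p) (g (t q) - g (t p)) =
      (rsSum f g t p m - f (t p) (g (t m) - g (t p))) +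
      (rsSum f g t (m + 1) q - f (t (m + 1)) (g (t q) - g (t (m + 1)))) +
      (f (t m) - f (t p)) (g (t q) - g (t m)) +
      (f (t (m + 1)) - f (t m)) (g (t q) - g (t (m + 1))) := by
    have e1 : rsSum f g t p q = rsSum f g t p m + (f (t m) (g (t (m + 1)) - g (t m)) +
        rsSum f g t (m + 1) q) := by
      unfold rsSum
      rw [← Finset.sum_Ico_consecutive _ hpm hmq.le, Finset.sum_eq_sum_Ico_succ_bot hmq]
    rw [e1]
    simp only [map_sub, sub_apply]
    abel
  have prod : ∀ a b c d : ℝ, |a - b| ≤ ℓ → |c - d| ≤ ℓ →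
      ‖(f a - f b) (g c - g d)‖ ≤ F * G * ℓ ^ (2 * γ) := by
    intro a b c d h1 h2
    have hγ0 : 0 ≤ γ := by linarith
    calc ‖(f a - f b) (g c - g d)‖ ≤ ‖f a - f b‖ * ‖g c - g d‖ :=
          ContinuousLinearMap.le_opNorm _ _
      _ ≤ (F * ℓ ^ γ) * (G * ℓ ^ γ) := by
          gcongr
          · exact (hf a b).trans (by gcongr)
          · exact (hg c d).trans (by gcongr)
      _ = F * G * ℓ ^ (2 * γ) := by
          rw [two_mul, Real.rpow_add_of_nonneg hℓ0 hγ0 hγ0]; ring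
  have p1 := prod (t m) (t p) (t q) (t m) (by rw [abs_of_nonneg] <;> linarith)
    (by rw [abs_of_nonneg] <;> linarith)
  have p2 := prod (t (m + 1)) (t m) (t q) (t (m + 1)) (by rw [abs_of_nonneg] <;> linarith)
    (by rw [abs_of_nonneg] <;> linarith)
  have hhalf : 2 * (ℓ / 2) ^ (2 * γ) = 2 ^ (1 - 2 * γ) * ℓ ^ (2 * γ) := by
    rw [Real.div_rpow hℓ0 (by norm_num), Real.rpow_sub (by norm_num), Real.rpow_one]
    ring
  have hc : 0 ≤ youngC γ * F * G := by positivity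
  rw [hdec]
  calc _ ≤ youngC γ * F * G * (ℓ / 2) ^ (2 * γ) + youngC γ * F * G * (ℓ / 2) ^ (2 * γ) +
          F * G * ℓ ^ (2 * γ) + F * G * ℓ ^ (2 * γ) := by
        refine (norm_add_le _ _).trans (add_le_add ((norm_add_le _ _).trans
          (add_le_add ((norm_add_le _ _).trans (add_le_add ?_ ?_)) p1)) p2)
        · exact b1.trans (by gcongr)
        · exact b2.trans (by gcongr)
    _ = F * G * (youngC γ * (2 * (ℓ / 2) ^ (2 * γ)) + 2 * ℓ ^ (2 * γ)) := by ring
    _ = F * G * ((youngC γ * 2 ^ (1 - 2 * γ) + 2) * ℓ ^ (2 * γ)) := by rw [hhalf]; ring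
    _ = _ := by rw [youngC_eq hγ]; ring

/-- Truncation of a point to the interval `[a, b]`. -/
def clamp (a b x : ℝ) : ℝ := max a (min x b)

lemma clamp_mono (a b : ℝ) : Monotone (clamp a b) := fun _ _ h =>
  max_le_max le_rfl (min_le_min h le_rfl)

/-- The contribution of `[c, d] ∩ [a, b]` to a sum is the same whether `[c, d]` is truncated to
`[a, b]` or conversely; if the intervals do not overlap, both sides vanish. -/
lemma clamp_term_comm (f : ℝ → M3) (g : ℝ → E3) {a b c d : ℝ} (hab : a ≤ b) (hcd : c ≤ d) :
    f (clamp a b c) (g (clamp a b d) - g (clamp a b c)) =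
      f (clamp c d a) (g (clamp c d b) - g (clamp c d a)) := by
  unfold clamp
  rcases lt_or_ge b c with h | h
  · rw [min_eq_right h.le, min_eq_right (h.le.trans hcd), min_eq_left (h.le.trans hcd),
      min_eq_left (hab.trans (h.le.trans hcd)), max_eq_left h.le, max_eq_left (hab.trans h.le)]
    simp
  rcases lt_or_ge d a with h' | h'
  · rw [min_eq_left (h'.le.trans hab), min_eq_left h, min_eq_right h'.le,
      min_eq_right (h'.le.trans hab), max_eq_left h'.le, max_eq_left (hcd.trans h'.le)]
    simp
  · rw [min_eq_left h, min_eq_left h', max_comm c a, min_comm b d,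
      max_eq_right (le_min h' hab), max_eq_right (le_min hcd h)]

lemma sum_rpow_le {γ δ : ℝ} (hγ : 1 / 2 < γ) {t : ℕ → ℝ} (ht : Monotone t) {n : ℕ}
    (hδ : ∀ i < n, t (i + 1) - t i ≤ δ) (h0 : t 0 = 0) (hn : t n = 1) :
    ∑ i ∈ Finset.Ico 0 n, (t (i + 1) - t i) ^ (2 * γ) ≤ δ ^ (2 * γ - 1) := by
  calc ∑ i ∈ Finset.Ico 0 n, (t (i + 1) - t i) ^ (2 * γ)
      ≤ ∑ i ∈ Finset.Ico 0 n, δ ^ (2 * γ - 1) * (t (i + 1) - t i) := by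
        refine Finset.sum_le_sum fun i hi => ?_
        have h1 : 0 ≤ t (i + 1) - t i := by linarith [ht (Nat.le_succ i)]
        have h2 : t (i + 1) - t i ≤ δ := hδ i (Finset.mem_Ico.1 hi).2
        calc (t (i + 1) - t i) ^ (2 * γ) = (t (i + 1) - t i) ^ (2 * γ - 1) * (t (i + 1) - t i) := by
              conv_rhs => rw [← Real.rpow_one (t (i + 1) - t i), ← Real.rpow_mul h1, one_mul,
                ← Real.rpow_add_of_nonneg h1 (by linarith) (by norm_num)]
              congr 1; ring
          _ ≤ _ := by
            gcongr
            linarith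
    _ = δ ^ (2 * γ - 1) := by
        rw [← Finset.mul_sum, ← Finset.range_eq_Ico, Finset.sum_range_sub, h0, hn]; ring

/-- Passing to the refinement of the partition `t` by the points of `s` changes the sum by a
power of the mesh of `t`. -/
lemma norm_rsSum_sub_refine_le {γ F G δ : ℝ} (hγ : 1 / 2 < γ) (hF : 0 ≤ F) (hG : 0 ≤ G)
    {f : ℝ → M3} {g : ℝ → E3} (hf : HolderC γ F f) (hg : HolderC γ G g) {t s : ℕ → ℝ}
    (ht : Monotone t) (hs : Monotone s) {n m : ℕ} (h0 : t 0 = 0) (hn : t n = 1)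
    (hs0 : s 0 = 0) (hsm : s m = 1) (hδ : ∀ i < n, t (i + 1) - t i ≤ δ) :
    ‖rsSum f g t 0 n -
        ∑ i ∈ Finset.Ico 0 n, rsSum f g (fun j => clamp (t i) (t (i + 1)) (s j)) 0 m‖ ≤
      youngC γ * F * G * δ ^ (2 * γ - 1) := by
  have hκ := youngC_pos hγ
  unfold rsSum
  rw [← Finset.sum_sub_distrib]
  calc _ ≤ ∑ i ∈ Finset.Ico 0 n, youngC γ * F * G * (t (i + 1) - t i) ^ (2 * γ) := by
        refine norm_sum_le_of_le _ fun i hi => ?_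
        have hin := (Finset.mem_Ico.1 hi).2
        have h1 : 0 ≤ t i := h0 ▸ ht (Nat.zero_le i)
        have h2 : t (i + 1) ≤ 1 := hn ▸ ht hin
        have h3 : t i ≤ t (i + 1) := ht (Nat.le_succ i)
        have := norm_rsSum_sub_le hγ hF hG hf hg
          (t := fun j => clamp (t i) (t (i + 1)) (s j)) (fun a b h => clamp_mono _ _ (hs h)) m 0 m
          (by simp)
        simp only [hs0, hsm] at this
        have c0 : clamp (t i) (t (i + 1)) 0 = t i := by
          unfold clamp; rw [min_eq_left (h1.trans h3), max_eq_left h1]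
        have c1 : clamp (t i) (t (i + 1)) 1 = t (i + 1) := by
          unfold clamp; rw [min_eq_right h2, max_eq_right h3]
        rw [c0, c1, norm_sub_rev] at this
        exact this
    _ ≤ _ := by
        rw [← Finset.mul_sum]
        gcongr
        exact sum_rpow_le hγ ht hδ h0 hn

/-- Two Riemann–Stieltjes sums are close when both meshes are small: both are compared with the
sum over the common refinement, which is symmetric in the two partitions. -/
lemma norm_rsSum_sub_rsSum_le {γ F G δ ε : ℝ} (hγ : 1 / 2 < γ) (hF : 0 ≤ F) (hG : 0 ≤ G)
    {f : ℝ → M3} {g : ℝ → E3} (hf : HolderC γ F f) (hg : HolderC γ G g) {t s : ℕ → ℝ}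
    (ht : Monotone t) (hs : Monotone s) {n m : ℕ} (h0 : t 0 = 0) (hn : t n = 1)
    (hs0 : s 0 = 0) (hsm : s m = 1) (hδ : ∀ i < n, t (i + 1) - t i ≤ δ)
    (hε : ∀ i < m, s (i + 1) - s i ≤ ε) :
    ‖rsSum f g t 0 n - rsSum f g s 0 m‖ ≤
      youngC γ * F * G * (δ ^ (2 * γ - 1) + ε ^ (2 * γ - 1)) := by
  have a := norm_rsSum_sub_refine_le hγ hF hG hf hg ht hs h0 hn hs0 hsm hδ
  have b := norm_rsSum_sub_refine_le hγ hF hG hf hg hs ht hs0 hsm h0 hn hε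
  have e : ∑ i ∈ Finset.Ico 0 n, rsSum f g (fun j => clamp (t i) (t (i + 1)) (s j)) 0 m =
      ∑ j ∈ Finset.Ico 0 m, rsSum f g (fun i => clamp (s j) (s (j + 1)) (t i)) 0 n := by
    unfold rsSum
    rw [Finset.sum_comm]
    refine Finset.sum_congr rfl fun j _ => Finset.sum_congr rfl fun i _ => ?_
    exact clamp_term_comm f g (ht (Nat.le_succ i)) (hs (Nat.le_succ j))
  rw [e] at a
  rw [norm_sub_rev] at b
  calc _ ≤ _ := norm_sub_le_norm_sub_add_norm_sub _ _ _
    _ ≤ _ := add_le_add a b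
    _ = _ := by ring

/-! ### The Young integral -/

lemma HolderC.nonneg {F : Type*} [NormedAddCommGroup F] {γ C : ℝ} {f : ℝ → F}
    (hf : HolderC γ C f) : 0 ≤ C := by
  have := hf 0 1
  simp only [zero_sub, abs_neg, abs_one, Real.one_rpow, mul_one] at this
  exact (norm_nonneg _).trans this

lemma HolderC.sub {F : Type*} [NormedAddCommGroup F] {γ C D : ℝ} {f g : ℝ → F}
    (hf : HolderC γ C f) (hg : HolderC γ D g) : HolderC γ (C + D) (fun s => f s - g s) := by
  intro s t
  calc ‖f s - g s - (f t - g t)‖ = ‖(f s - f t) - (g s - g t)‖ := by congr 1; abel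
    _ ≤ _ := norm_sub_le _ _
    _ ≤ _ := add_le_add (hf s t) (hg s t)
    _ = _ := by ring

/-- Left-point sum of `∫ f dg` along a partition of `[0, 1]`. -/
def ptnSum (f : ℝ → M3) (g : ℝ → E3) (P : Ptn 0 1) : E3 :=
  ∑ i ∈ Finset.range P.n, f (P.t i) (g (P.t (i + 1)) - g (P.t i))

/-- The points of a partition extend to a monotone sequence. -/
lemma Ptn.exists_mono (P : Ptn 0 1) : ∃ t : ℕ → ℝ, Monotone t ∧ t 0 = 0 ∧ t P.n = 1 ∧
    (∀ i ≤ P.n, t i = P.t i) := by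
  refine ⟨fun i => P.t (min i P.n), ?_, by simp [P.first], by simp [P.last], fun i hi => by
    simp [hi]⟩
  refine monotone_nat_of_le_succ fun i => ?_
  rcases lt_or_ge i P.n with h | h
  · rw [min_eq_left h.le, min_eq_left (Nat.succ_le_of_lt h)]
    exact P.mono i h
  · rw [min_eq_right h, min_eq_right (by omega)]

lemma Ptn.mem_Icc (P : Ptn 0 1) {i : ℕ} (hi : i ≤ P.n) : P.t i ∈ Icc (0:ℝ) 1 := by
  obtain ⟨t, ht, h0, h1, he⟩ := P.exists_mono
  rw [← he i hi]
  exact ⟨h0 ▸ ht (Nat.zero_le i), h1 ▸ ht hi⟩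

lemma ptnSum_eq_rsSum (f : ℝ → M3) (g : ℝ → E3) (P : Ptn 0 1) {t : ℕ → ℝ}
    (ht : ∀ i ≤ P.n, t i = P.t i) : ptnSum f g P = rsSum f g t 0 P.n := by
  unfold ptnSum rsSum
  rw [Finset.range_eq_Ico]
  refine Finset.sum_congr rfl fun i hi => ?_
  have := (Finset.mem_Ico.1 hi).2
  rw [ht i this.le, ht (i + 1) this]

lemma norm_ptnSum_sub_le {γ F G δ ε : ℝ} (hγ : 1 / 2 < γ) {f : ℝ → M3} {g : ℝ → E3}
    (hf : HolderC γ F f) (hg : HolderC γ G g) {P Q : Ptn 0 1} (hP : P.MeshLE δ)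
    (hQ : Q.MeshLE ε) :
    ‖ptnSum f g P - ptnSum f g Q‖ ≤
      youngC γ * F * G * (δ ^ (2 * γ - 1) + ε ^ (2 * γ - 1)) := by
  obtain ⟨t, ht, h0, h1, he⟩ := P.exists_mono
  obtain ⟨s, hs, h0', h1', he'⟩ := Q.exists_mono
  rw [ptnSum_eq_rsSum f g P he, ptnSum_eq_rsSum f g Q he']
  refine norm_rsSum_sub_rsSum_le hγ hf.nonneg hg.nonneg hf hg ht hs h0 h1 h0' h1' ?_ ?_
  · intro i hi
    rw [he i hi.le, he (i + 1) hi]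
    exact hP i hi
  · intro i hi
    rw [he' i hi.le, he' (i + 1) hi]
    exact hQ i hi

/-- For a closed integrator the sums are bounded by the Hölder seminorms alone: the leading term
`f(0) (g(1) - g(0))` vanishes. -/
lemma norm_ptnSum_le {γ F G : ℝ} (hγ : 1 / 2 < γ) {f : ℝ → M3} {g : ℝ → E3}
    (hf : HolderC γ F f) (hg : HolderC γ G g) (hc : g 0 = g 1) (P : Ptn 0 1) :
    ‖ptnSum f g P‖ ≤ youngC γ * F * G := by
  obtain ⟨t, ht, h0, h1, he⟩ := P.exists_mono
  rw [ptnSum_eq_rsSum f g P he]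
  have := norm_rsSum_sub_le hγ hf.nonneg hg.nonneg hf hg ht P.n 0 P.n (by simp)
  simpa [h0, h1, hc] using this

/-- The partition of `[0, 1]` into `n + 1` intervals of equal length. -/
def unifPtn (n : ℕ) : Ptn 0 1 where
  n := n + 1
  t i := (i : ℝ) / (n + 1)
  first := by simp
  last := by push_cast; exact div_self (by positivity)
  mono i _ := by gcongr; simp

lemma unifPtn_mesh (n : ℕ) : (unifPtn n).MeshLE (1 / (n + 1)) := by
  intro i _
  simp only [unifPtn]
  rw [← sub_div]
  simp

/-- The Young integral `∫_0^1 f dg`, as the limit of the sums over uniform partitions. -/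
def young (f : ℝ → M3) (g : ℝ → E3) : E3 :=
  limUnder atTop fun n => ptnSum f g (unifPtn n)

lemma tendsto_mesh_rpow {γ : ℝ} (hγ : 1 / 2 < γ) :
    Tendsto (fun n : ℕ => (1 / ((n:ℝ) + 1)) ^ (2 * γ - 1)) atTop (𝓝 0) := by
  have := (tendsto_one_div_add_atTop_nhds_zero_nat (𝕜 := ℝ)).rpow_const
    (p := 2 * γ - 1) (Or.inr (by linarith))
  rwa [Real.zero_rpow (by linarith)] at this

lemma tendsto_mesh {γ : ℝ} (hγ : 1 / 2 < γ) (K : ℝ) :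
    Tendsto (fun n : ℕ => K * ((1 / ((n:ℝ) + 1)) ^ (2 * γ - 1) +
      (1 / ((n:ℝ) + 1)) ^ (2 * γ - 1))) atTop (𝓝 0) := by
  simpa using ((tendsto_mesh_rpow hγ).add (tendsto_mesh_rpow hγ)).const_mul K

lemma tendsto_young {γ F G : ℝ} (hγ : 1 / 2 < γ) {f : ℝ → M3} {g : ℝ → E3}
    (hf : HolderC γ F f) (hg : HolderC γ G g) :
    Tendsto (fun n => ptnSum f g (unifPtn n)) atTop (𝓝 (young f g)) := by
  have hκ := youngC_pos hγ
  have hF := hf.nonneg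
  have hG := hg.nonneg
  refine CauchySeq.tendsto_limUnder (cauchySeq_of_le_tendsto_0 _ (fun n m N hn hm => ?_)
    (tendsto_mesh hγ (youngC γ * F * G)))
  rw [dist_eq_norm]
  refine (norm_ptnSum_sub_le hγ hf hg (unifPtn_mesh n) (unifPtn_mesh m)).trans ?_
  have h2 : 0 ≤ 2 * γ - 1 := by linarith
  gcongr

/-- Convergence of the sums over all partitions as the mesh tends to zero. -/
lemma rsLimit_young {γ F G : ℝ} (hγ : 1 / 2 < γ) {f : ℝ → M3} {g : ℝ → E3}
    (hf : HolderC γ F f) (hg : HolderC γ G g) :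
    RSLimit 0 1 (ptnSum f g) (young f g) := by
  intro ε hε
  have hκ := youngC_pos hγ
  have hF := hf.nonneg
  have hG := hg.nonneg
  have h2 : 0 < 2 * γ - 1 := by linarith
  set K := youngC γ * F * G with hK
  have hK0 : 0 ≤ K := by positivity
  refine ⟨(ε / (K + 1)) ^ (2 * γ - 1)⁻¹, by positivity, fun P hP => ?_⟩
  have key : ‖ptnSum f g P - young f g‖ ≤
      K * (((ε / (K + 1)) ^ (2 * γ - 1)⁻¹) ^ (2 * γ - 1) + 0) := by
    exact le_of_tendsto_of_tendsto' ((tendsto_young hγ hf hg).const_sub _).norm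
      (((tendsto_mesh_rpow hγ).const_add _).const_mul K)
      fun n => norm_ptnSum_sub_le hγ hf hg hP (unifPtn_mesh n)
  rw [Real.rpow_inv_rpow (by positivity) h2.ne', add_zero] at key
  refine key.trans ?_
  rw [mul_div_assoc', div_le_iff₀ (by positivity)]
  nlinarith

/-- A limit of the Riemann–Stieltjes sums, if it exists, is the Young integral. -/
lemma RSLimit.eq_young {f : ℝ → M3} {g : ℝ → E3} {I : E3} (h : RSLimit 0 1 (ptnSum f g) I) :
    young f g = I := by
  refine Tendsto.limUnder_eq (Metric.tendsto_atTop.2 fun ε hε => ?_)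
  obtain ⟨δ, hδ, H⟩ := h (ε / 2) (by linarith)
  obtain ⟨N, hN⟩ := exists_nat_one_div_lt hδ
  refine ⟨N, fun n hn => ?_⟩
  rw [dist_eq_norm]
  refine (H _ fun i hi => (unifPtn_mesh n i hi).trans ?_).trans_lt (by linarith)
  refine le_trans ?_ hN.le
  gcongr

lemma norm_young_le {γ F G : ℝ} (hγ : 1 / 2 < γ) {f : ℝ → M3} {g : ℝ → E3}
    (hf : HolderC γ F f) (hg : HolderC γ G g) (hc : g 0 = g 1) :
    ‖young f g‖ ≤ youngC γ * F * G :=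
  le_of_tendsto' (tendsto_young hγ hf hg).norm fun _ => norm_ptnSum_le hγ hf hg hc _

lemma young_sub_left {γ F F' G : ℝ} (hγ : 1 / 2 < γ) {f f' : ℝ → M3} {g : ℝ → E3}
    (hf : HolderC γ F f) (hf' : HolderC γ F' f') (hg : HolderC γ G g) :
    young (fun s => f s - f' s) g = young f g - young f' g := by
  refine tendsto_nhds_unique (tendsto_young hγ (hf.sub hf') hg) ?_
  refine ((tendsto_young hγ hf hg).sub (tendsto_young hγ hf' hg)).congr fun n => ?_
  simp only [ptnSum, ← Finset.sum_sub_distrib, sub_apply]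

lemma young_sub_right {γ F G G' : ℝ} (hγ : 1 / 2 < γ) {f : ℝ → M3} {g g' : ℝ → E3}
    (hf : HolderC γ F f) (hg : HolderC γ G g) (hg' : HolderC γ G' g') :
    young f (fun s => g s - g' s) = young f g - young f g' := by
  refine tendsto_nhds_unique (tendsto_young hγ hf (hg.sub hg')) ?_
  refine ((tendsto_young hγ hf hg).sub (tendsto_young hγ hf hg')).congr fun n => ?_
  simp only [ptnSum, ← Finset.sum_sub_distrib, map_sub]
  refine Finset.sum_congr rfl fun i _ => ?_
  abel

/-! ### Increments of the kernel and of the velocity -/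

lemma lipschitz_of_fderiv_bound {G : Type*} [NormedAddCommGroup G] [NormedSpace ℝ G]
    {F : E3 → G} (hF : Differentiable ℝ F) {K : ℝ} (hK : ∀ x, ‖fderiv ℝ F x‖ ≤ K) (x y : E3) :
    ‖F x - F y‖ ≤ K * ‖x - y‖ :=
  convex_univ.norm_image_sub_le_of_norm_fderiv_le (fun z _ => hF z) (fun z _ => hK z)
    (mem_univ y) (mem_univ x)

lemma hasDerivAt_line {G : Type*} [NormedAddCommGroup G] [NormedSpace ℝ G] {F : E3 → G}
    (hF : Differentiable ℝ F) (y u w v : E3) (s : ℝ) :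
    HasDerivAt (fun s : ℝ => F ((y + s • u) - (w + s • v)))
      (fderiv ℝ F ((y + s • u) - (w + s • v)) (u - v)) s := by
  have h : HasDerivAt (fun s : ℝ => (y + s • u) - (w + s • v)) (u - v) s := by
    have hu := ((hasDerivAt_id s).smul_const u).const_add y
    have hv := ((hasDerivAt_id s).smul_const v).const_add w
    have h := hu.sub hv
    rw [one_smul, one_smul] at h
    exact h
  exact (hF _).hasFDerivAt.comp_hasDerivAt s h

lemma norm_add_smul_le {a d : E3} {P s : ℝ} (h0 : ‖a‖ ≤ P) (h1 : ‖a + d‖ ≤ P)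
    (hs : s ∈ Ico (0:ℝ) 1) : ‖a + s • d‖ ≤ P := by
  have e : a + s • d = (1 - s) • a + s • (a + d) := by module
  have := hs.1
  have : 0 ≤ 1 - s := by linarith [hs.2]
  rw [e]
  calc _ ≤ ‖(1 - s) • a‖ + ‖s • (a + d)‖ := norm_add_le _ _
    _ = (1 - s) * ‖a‖ + s * ‖a + d‖ := by
      rw [norm_smul, norm_smul, Real.norm_of_nonneg ‹_›, Real.norm_of_nonneg ‹_›]
    _ ≤ (1 - s) * P + s * P := by gcongr
    _ = P := by ring

/-- Rectangular increments of `(x, z) ↦ F (x - z)` are of product order when `∇F` is Lipschitz. -/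
lemma second_difference_le {G : Type*} [NormedAddCommGroup G] [NormedSpace ℝ G] {F : E3 → G}
    (hF : Differentiable ℝ F) {K : ℝ}
    (hK : ∀ x y, ‖fderiv ℝ F x - fderiv ℝ F y‖ ≤ K * ‖x - y‖) (x x' z z' : E3) :
    ‖F (x - z) - F (x' - z) - F (x - z') + F (x' - z')‖ ≤ K * ‖x - x'‖ * ‖z - z'‖ := by
  have hd : ∀ w s, HasDerivAt (fun s : ℝ => F ((x' + s • (x - x')) - w))
      (fderiv ℝ F ((x' + s • (x - x')) - w) (x - x')) s := fun w s => by
    simpa using hasDerivAt_line hF x' (x - x') w 0 s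
  have := norm_image_sub_le_of_norm_deriv_le_segment_01'
    (f := fun s : ℝ => F ((x' + s • (x - x')) - z) - F ((x' + s • (x - x')) - z'))
    (C := K * ‖x - x'‖ * ‖z - z'‖)
    (fun s _ => ((hd z s).sub (hd z' s)).hasDerivWithinAt) (fun s _ => by
      rw [← sub_apply]
      refine (ContinuousLinearMap.le_opNorm _ _).trans ?_
      have h := hK (x' + s • (x - x') - z) (x' + s • (x - x') - z')
      rw [sub_sub_sub_cancel_left, norm_sub_rev z' z] at h
      calc _ ≤ (K * ‖z - z'‖) * ‖x - x'‖ := by gcongr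
        _ = _ := by ring)
  simp only [one_smul, zero_smul, add_zero, add_sub_cancel] at this
  convert this using 2
  abel

lemma fderiv_lipschitz {G : Type*} [NormedAddCommGroup G] [NormedSpace ℝ G]
    {F : E3 → G} (hF : ContDiff ℝ 2 F) {K : ℝ} (hK : ∀ x, ‖iteratedFDeriv ℝ 2 F x‖ ≤ K)
    (x y : E3) : ‖fderiv ℝ F x - fderiv ℝ F y‖ ≤ K * ‖x - y‖ := by
  have h1 : ContDiff ℝ 1 (fderiv ℝ F) := hF.fderiv_right (by norm_num)
  refine lipschitz_of_fderiv_bound (h1.differentiable (by norm_num)) (fun x => ?_) x y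
  have := hK x
  rwa [show (2:ℕ) = 0 + 1 + 1 from rfl, ← norm_iteratedFDeriv_fderiv,
    ← norm_iteratedFDeriv_fderiv, norm_iteratedFDeriv_zero] at this

/-- Quantitative consequences of `‖∇A‖_2 < ∞`, with a common constant `K`: the kernel and its
derivative are Lipschitz, and rectangular increments of `(a, b) ↦ ∇A (a - b)` are of product
order. -/
structure KernelBound (A : E3 → M3) (K : ℝ) : Prop where
  nonneg : 0 ≤ K
  diff : Differentiable ℝ A
  bound : ∀ x, ‖fderiv ℝ A x‖ ≤ K
  lip : ∀ x y, ‖A x - A y‖ ≤ K * ‖x - y‖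
  lip' : ∀ x y, ‖fderiv ℝ A x - fderiv ℝ A y‖ ≤ K * ‖x - y‖
  second : ∀ a a' b b', ‖fderiv ℝ A (a - b) - fderiv ℝ A (a' - b) - fderiv ℝ A (a - b') +
    fderiv ℝ A (a' - b')‖ ≤ K * ‖a - a'‖ * ‖b - b'‖

lemma NablaBdd.exists_kernelBound {A : E3 → M3} (hA : NablaBdd 1 2 A) :
    ∃ K, KernelBound A K := by
  obtain ⟨hc, hb⟩ := hA
  obtain ⟨K1, h1⟩ := hb 1 (by norm_num) (by norm_num)
  obtain ⟨K2, h2⟩ := hb 2 (by norm_num) (by norm_num)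
  obtain ⟨K3, h3⟩ := hb 3 (by norm_num) (by norm_num)
  have b1 : ∀ x, ‖fderiv ℝ A x‖ ≤ K1 := fun x => by
    have := h1 (mem_range_self x)
    rwa [show (1:ℕ) = 0 + 1 from rfl, ← norm_iteratedFDeriv_fderiv, norm_iteratedFDeriv_zero]
      at this
  have b2 : ∀ x, ‖iteratedFDeriv ℝ 2 A x‖ ≤ K2 := fun x => h2 (mem_range_self x)
  have b3 : ∀ x, ‖iteratedFDeriv ℝ 2 (fderiv ℝ A) x‖ ≤ K3 := fun x => by
    have := h3 (mem_range_self x)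
    rwa [norm_iteratedFDeriv_fderiv]
  have hc3 : ContDiff ℝ 3 A := by
    have e : (((1:ℕ) : WithTop ℕ∞) + ((2:ℕ) : WithTop ℕ∞)) = 3 := by norm_num
    rwa [e] at hc
  have hc2 : ContDiff ℝ 2 (fderiv ℝ A) := hc3.fderiv_right (by norm_num)
  have d0 : Differentiable ℝ A := hc3.differentiable (by norm_num)
  have d1 : Differentiable ℝ (fderiv ℝ A) := hc2.differentiable (by norm_num)
  have k1 : 0 ≤ K1 := (norm_nonneg (fderiv ℝ A 0)).trans (b1 0)
  have k2 : 0 ≤ K2 := (norm_nonneg (iteratedFDeriv ℝ 2 A 0)).trans (b2 0)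
  have k3 : 0 ≤ K3 := (norm_nonneg (iteratedFDeriv ℝ 2 (fderiv ℝ A) 0)).trans (b3 0)
  refine ⟨K1 + K2 + K3, by positivity, d0, fun x => (b1 x).trans (by linarith), ?_, ?_, ?_⟩
  · exact lipschitz_of_fderiv_bound d0 fun x => (b1 x).trans (by linarith)
  · exact fderiv_lipschitz (hc3.of_le (by norm_num)) fun x => (b2 x).trans (by linarith)
  · exact second_difference_le d1 (fderiv_lipschitz hc2 fun x => (b3 x).trans (by linarith))

lemma sub_sub_sub_eq_add {G : Type*} [AddCommGroup G] (a b c d : G) :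
    (a - b) - (c - d) = a - b - c + d := by abel

lemma rect_sub_rect {G : Type*} [AddCommGroup G] (a b c d e f g h : G) :
    (a - b - (e - f)) - (c - d - (g - h)) = (a - b - c + d) - (e - f - g + h) := by abel

/-- Increment in the second argument of the difference of `(x, z) ↦ A (x - z)` along two
configurations. The two configurations are joined by straight lines. -/
lemma KernelBound.four_point {A : E3 → M3} {K : ℝ} (hA : KernelBound A K)
    {x z z' y w w' : E3} {Q M q : ℝ} (hz : ‖z - z'‖ ≤ Q) (hw : ‖w - w'‖ ≤ Q)
    (hM : ‖(x - y) - (z - w)‖ ≤ M) (hq : ‖(z - w) - (z' - w')‖ ≤ q) :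
    ‖(A (x - z) - A (y - w)) - (A (x - z') - A (y - w'))‖ ≤ K * (Q * M + q) := by
  have hK := hA.nonneg
  have hQ0 : 0 ≤ Q := (norm_nonneg _).trans hz
  have hd := hasDerivAt_line hA.diff y (x - y)
  have := norm_image_sub_le_of_norm_deriv_le_segment_01'
    (f := fun s : ℝ => A ((y + s • (x - y)) - (w + s • (z - w))) -
      A ((y + s • (x - y)) - (w' + s • (z' - w')))) (C := K * (Q * M + q))
    (fun s _ => ((hd w (z - w) s).sub (hd w' (z' - w') s)).hasDerivWithinAt) (fun s hs => by
      set N1 := fderiv ℝ A ((y + s • (x - y)) - (w + s • (z - w))) with hN1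
      set N2 := fderiv ℝ A ((y + s • (x - y)) - (w' + s • (z' - w'))) with hN2
      have e : N1 ((x - y) - (z - w)) - N2 ((x - y) - (z' - w')) =
          (N1 - N2) ((x - y) - (z - w)) - N2 ((z - w) - (z' - w')) := by
        simp only [map_sub, sub_apply]; abel
      have h12 : ‖N1 - N2‖ ≤ K * Q := by
        refine (hA.lip' _ _).trans ?_
        gcongr
        rw [sub_sub_sub_cancel_left, norm_sub_rev]
        have : w + s • (z - w) - (w' + s • (z' - w')) =
          (w - w') + s • ((z - w) - (z' - w')) := by module
        rw [this]
        refine norm_add_smul_le hw ?_ hs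
        convert hz using 2; abel
      rw [e]
      calc _ ≤ ‖(N1 - N2) ((x - y) - (z - w))‖ + ‖N2 ((z - w) - (z' - w'))‖ := norm_sub_le _ _
        _ ≤ ‖N1 - N2‖ * ‖(x - y) - (z - w)‖ + ‖N2‖ * ‖(z - w) - (z' - w')‖ :=
          add_le_add (ContinuousLinearMap.le_opNorm _ _) (ContinuousLinearMap.le_opNorm _ _)
        _ ≤ (K * Q) * M + K * q := by
          gcongr
          exact hA.bound _
        _ = _ := by ring)
  simp only [one_smul, zero_smul, add_zero, add_sub_cancel] at this
  rwa [sub_sub_sub_comm]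

/-- Rectangular increment of the difference of `(x, z) ↦ A (x - z)` along two configurations.
This is the estimate which uses three derivatives of the kernel. -/
lemma KernelBound.eight_point {A : E3 → M3} {K : ℝ} (hA : KernelBound A K)
    {x x' z z' y y' w w' : E3} {P Q M p q : ℝ} (hx : ‖x - x'‖ ≤ P) (hy : ‖y - y'‖ ≤ P)
    (hz : ‖z - z'‖ ≤ Q) (hw : ‖w - w'‖ ≤ Q) (hM : ‖(x - y) - (z - w)‖ ≤ M)
    (hp : ‖(x - y) - (x' - y')‖ ≤ p) (hq : ‖(z - w) - (z' - w')‖ ≤ q) :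
    ‖(A (x - z) - A (x' - z) - A (x - z') + A (x' - z')) -
      (A (y - w) - A (y' - w) - A (y - w') + A (y' - w'))‖ ≤
        K * (P * Q * M + Q * p + P * q) := by
  have hK := hA.nonneg
  have hP0 : 0 ≤ P := (norm_nonneg _).trans hx
  have hQ0 : 0 ≤ Q := (norm_nonneg _).trans hz
  have hd := hasDerivAt_line hA.diff
  have := norm_image_sub_le_of_norm_deriv_le_segment_01'
    (f := fun s : ℝ => A ((y + s • (x - y)) - (w + s • (z - w))) -
      A ((y' + s • (x' - y')) - (w + s • (z - w))) -
      A ((y + s • (x - y)) - (w' + s • (z' - w'))) +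
      A ((y' + s • (x' - y')) - (w' + s • (z' - w')))) (C := K * (P * Q * M + Q * p + P * q))
    (fun s _ => ((((hd y (x - y) w (z - w) s).sub (hd y' (x' - y') w (z - w) s)).sub
      (hd y (x - y) w' (z' - w') s)).add (hd y' (x' - y') w' (z' - w') s)).hasDerivWithinAt)
    (fun s hs => by
      have hX : ‖(y + s • (x - y)) - (y' + s • (x' - y'))‖ ≤ P := by
        have : y + s • (x - y) - (y' + s • (x' - y')) =
          (y - y') + s • ((x - y) - (x' - y')) := by module
        rw [this]
        refine norm_add_smul_le hy ?_ hs
        convert hx using 2; abel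
      have hZ : ‖(w + s • (z - w)) - (w' + s • (z' - w'))‖ ≤ Q := by
        have : w + s • (z - w) - (w' + s • (z' - w')) =
          (w - w') + s • ((z - w) - (z' - w')) := by module
        rw [this]
        refine norm_add_smul_le hw ?_ hs
        convert hz using 2; abel
      generalize y + s • (x - y) = a at *
      generalize y' + s • (x' - y') = a' at *
      generalize w + s • (z - w) = b at *
      generalize w' + s • (z' - w') = b' at *
      set N := fderiv ℝ A with hN
      have e : N (a - b) ((x - y) - (z - w)) - N (a' - b) ((x' - y') - (z - w)) -
          N (a - b') ((x - y) - (z' - w')) + N (a' - b') ((x' - y') - (z' - w')) =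
          (N (a - b) - N (a' - b) - N (a - b') + N (a' - b')) ((x - y) - (z - w)) +
          (N (a' - b) - N (a' - b')) ((x - y) - (x' - y')) -
          (N (a - b') - N (a' - b')) ((z - w) - (z' - w')) := by
        simp only [map_sub, sub_apply, add_apply]; abel
      have h1 : ‖N (a - b) - N (a' - b) - N (a - b') + N (a' - b')‖ ≤ K * P * Q :=
        (hA.second a a' b b').trans (by gcongr)
      have h2 : ‖N (a' - b) - N (a' - b')‖ ≤ K * Q := (hA.lip' _ _).trans (by
        rw [sub_sub_sub_cancel_left, norm_sub_rev]; gcongr)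
      have h3 : ‖N (a - b') - N (a' - b')‖ ≤ K * P := (hA.lip' _ _).trans (by
        rw [sub_sub_sub_cancel_right]; gcongr)
      rw [e]
      calc _ ≤ _ := norm_sub_le _ _
        _ ≤ _ := add_le_add (norm_add_le _ _) le_rfl
        _ ≤ (K * P * Q) * M + (K * Q) * p + (K * P) * q :=
          add_le_add (add_le_add (ContinuousLinearMap.le_of_opNorm_le_of_le _ h1 hM)
            (ContinuousLinearMap.le_of_opNorm_le_of_le _ h2 hp))
            (ContinuousLinearMap.le_of_opNorm_le_of_le _ h3 hq)
        _ = _ := by ring)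
  simpa only [one_smul, zero_smul, add_zero, add_sub_cancel] using this

/-- The velocity of the curve `Z`, evaluated along the curve itself: `ξ ↦ V^Z(Z_ξ)`. -/
def vel (A : E3 → M3) (Z : ℝ → E3) (ξ : ℝ) : E3 := young (fun ρ => A (Z ξ - Z ρ)) Z

lemma KernelBound.holder_comp {A : E3 → M3} {K γ R : ℝ} (hA : KernelBound A K) {Z : ℝ → E3}
    (hZ : HolderC γ R Z) (x : E3) : HolderC γ (K * R) (fun ρ => A (x - Z ρ)) := by
  intro s t
  have hK := hA.nonneg
  calc _ ≤ K * ‖(x - Z s) - (x - Z t)‖ := hA.lip _ _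
    _ = K * ‖Z s - Z t‖ := by rw [sub_sub_sub_cancel_left, norm_sub_rev]
    _ ≤ K * (R * |s - t| ^ γ) := by gcongr; exact hZ s t
    _ = _ := by ring

lemma KernelBound.norm_vel_le {A : E3 → M3} {K γ R : ℝ} (hγ : 1 / 2 < γ)
    (hA : KernelBound A K) {Z : ℝ → E3} (hZ : HolderC γ R Z) (hc : Z 0 = Z 1) (ξ : ℝ) :
    ‖vel A Z ξ‖ ≤ youngC γ * (K * R) * R :=
  norm_young_le hγ (hA.holder_comp hZ _) hZ hc

lemma KernelBound.holder_comp_sub {A : E3 → M3} {K γ R : ℝ} (hA : KernelBound A K)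
    {Z : ℝ → E3} (hZ : HolderC γ R Z) (x x' : E3) :
    HolderC γ (K * ‖x - x'‖ * R) (fun ρ => A (x - Z ρ) - A (x' - Z ρ)) := by
  intro s t
  have hK := hA.nonneg
  have := second_difference_le hA.diff hA.lip' x x' (Z s) (Z t)
  calc _ = ‖A (x - Z s) - A (x' - Z s) - A (x - Z t) + A (x' - Z t)‖ :=
      congrArg norm (sub_sub_sub_eq_add _ _ _ _)
    _ ≤ _ := this
    _ ≤ K * ‖x - x'‖ * (R * |s - t| ^ γ) := by gcongr; exact hZ s t
    _ = _ := by ring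

/-- Hölder regularity of the velocity along the curve. -/
lemma KernelBound.norm_vel_sub_le {A : E3 → M3} {K γ R : ℝ} (hγ : 1 / 2 < γ)
    (hA : KernelBound A K) {Z : ℝ → E3} (hZ : HolderC γ R Z) (hc : Z 0 = Z 1) (ξ η : ℝ) :
    ‖vel A Z ξ - vel A Z η‖ ≤ youngC γ * K * R ^ 3 * |ξ - η| ^ γ := by
  have hK := hA.nonneg
  have hR := hZ.nonneg
  have hκ := youngC_pos hγ
  unfold vel
  rw [← young_sub_left hγ (hA.holder_comp hZ _) (hA.holder_comp hZ _) hZ]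
  calc _ ≤ _ := norm_young_le hγ (hA.holder_comp_sub hZ _ _) hZ hc
    _ ≤ youngC γ * (K * (R * |ξ - η| ^ γ) * R) * R := by gcongr; exact hZ ξ η
    _ = _ := by ring

/-- The velocity along the curve depends on the curve in a locally Lipschitz way, in the supremum
norm. -/
lemma KernelBound.norm_vel_sub_vel_le {A : E3 → M3} {K γ R d : ℝ} (hγ : 1 / 2 < γ)
    (hA : KernelBound A K) {Z W : ℝ → E3} (hZ : HolderC γ R Z) (hW : HolderC γ R W)
    (hc : Z 0 = Z 1) (hc' : W 0 = W 1) (hD : HolderC γ d (fun s => Z s - W s))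
    (hd : ∀ s, ‖Z s - W s‖ ≤ d) (ξ : ℝ) :
    ‖vel A Z ξ - vel A W ξ‖ ≤ youngC γ * K * (2 * R ^ 2 + 2 * R) * d := by
  have hK := hA.nonneg
  have hR := hZ.nonneg
  have hκ := youngC_pos hγ
  have e : vel A Z ξ - vel A W ξ =
      young (fun ρ => A (Z ξ - Z ρ) - A (W ξ - W ρ)) Z +
      young (fun ρ => A (W ξ - W ρ)) (fun ρ => Z ρ - W ρ) := by
    rw [young_sub_left hγ (hA.holder_comp hZ _) (hA.holder_comp hW _) hZ,
      young_sub_right hγ (hA.holder_comp hW _) hZ hW]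
    unfold vel
    abel
  have hH : HolderC γ (K * (R * (2 * d) + d)) (fun ρ => A (Z ξ - Z ρ) - A (W ξ - W ρ)) := by
    intro s t
    refine (hA.four_point (hZ s t) (hW s t) (M := 2 * d) ?_ (hD s t)).trans (le_of_eq (by ring))
    exact (norm_sub_le _ _).trans (by linarith [hd ξ, hd s])
  rw [e]
  calc _ ≤ _ := norm_add_le _ _
    _ ≤ youngC γ * (K * (R * (2 * d) + d)) * R + youngC γ * (K * R) * d :=
      add_le_add (norm_young_le hγ hH hZ hc)
        (norm_young_le hγ (hA.holder_comp hW _) hD (by simp only [hc, hc']))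
    _ = _ := by ring

/-- The velocity along the curve depends on the curve in a locally Lipschitz way, in the Hölder
seminorm. -/
lemma KernelBound.norm_vel_sub_vel_sub_le {A : E3 → M3} {K γ R d : ℝ} (hγ : 1 / 2 < γ)
    (hA : KernelBound A K) {Z W : ℝ → E3} (hZ : HolderC γ R Z) (hW : HolderC γ R W)
    (hc : Z 0 = Z 1) (hc' : W 0 = W 1) (hD : HolderC γ d (fun s => Z s - W s))
    (hd : ∀ s, ‖Z s - W s‖ ≤ d) (ξ η : ℝ) :
    ‖(vel A Z ξ - vel A W ξ) - (vel A Z η - vel A W η)‖ ≤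
      youngC γ * K * (2 * R ^ 3 + 3 * R ^ 2) * d * |ξ - η| ^ γ := by
  have hK := hA.nonneg
  have hR := hZ.nonneg
  have hd0 := hD.nonneg
  have hκ := youngC_pos hγ
  have hZA := fun x => hA.holder_comp hZ x
  have hWA := fun x => hA.holder_comp hW x
  have e : (vel A Z ξ - vel A W ξ) - (vel A Z η - vel A W η) =
      young (fun ρ => (A (Z ξ - Z ρ) - A (Z η - Z ρ)) - (A (W ξ - W ρ) - A (W η - W ρ))) Z +
      young (fun ρ => A (W ξ - W ρ) - A (W η - W ρ)) (fun ρ => Z ρ - W ρ) := by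
    rw [young_sub_left hγ ((hZA _).sub (hZA _)) ((hWA _).sub (hWA _)) hZ,
      young_sub_right hγ ((hWA _).sub (hWA _)) hZ hW,
      young_sub_left hγ (hZA _) (hZA _) hZ, young_sub_left hγ (hWA _) (hWA _) hW]
    unfold vel
    abel
  have hH : HolderC γ (K * (2 * R ^ 2 + 2 * R) * d * |ξ - η| ^ γ)
      (fun ρ => (A (Z ξ - Z ρ) - A (Z η - Z ρ)) - (A (W ξ - W ρ) - A (W η - W ρ))) := by
    intro s t
    have := hA.eight_point (hZ ξ η) (hW ξ η) (hZ s t) (hW s t) (M := 2 * d)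
      ((norm_sub_le _ _).trans (by linarith [hd ξ, hd s])) (hD ξ η) (hD s t)
    refine Eq.trans_le ?_ (this.trans (le_of_eq (by ring)))
    rw [rect_sub_rect]
  rw [e]
  calc _ ≤ _ := norm_add_le _ _
    _ ≤ youngC γ * (K * (2 * R ^ 2 + 2 * R) * d * |ξ - η| ^ γ) * R +
        youngC γ * (K * ‖W ξ - W η‖ * R) * d :=
      add_le_add (norm_young_le hγ hH hZ hc)
        (norm_young_le hγ (hA.holder_comp_sub hW _ _) hD (by simp only [hc, hc']))
    _ ≤ youngC γ * (K * (2 * R ^ 2 + 2 * R) * d * |ξ - η| ^ γ) * R +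
        youngC γ * (K * (R * |ξ - η| ^ γ) * R) * d := by gcongr; exact hW ξ η
    _ = _ := by ring

/-! ### The Banach space of closed Hölder curves -/

/-- The projection of the real line onto `[0,1]`. -/
def proj01 (ξ : ℝ) : Icc (0:ℝ) 1 := projIcc 0 1 zero_le_one ξ

lemma proj01_of_mem {ξ : ℝ} (h : ξ ∈ Icc (0:ℝ) 1) : proj01 ξ = ⟨ξ, h⟩ := projIcc_of_mem _ h

lemma abs_proj01_sub_le (ξ η : ℝ) : |(proj01 ξ : ℝ) - proj01 η| ≤ |ξ - η| :=
  abs_projIcc_sub_projIcc zero_le_one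

/-- The Banach space `𝒞^γ`, realized as a closed subspace of `ℓ^∞([0,1]²; ℝ³)`: the curve `X` is
encoded by `h (ξ, ξ) = X_ξ` and, off the diagonal, `h (ξ, η) = (X_ξ - X_η) / |ξ - η|^γ`. Its norm
is the maximum of `‖X‖_∞` and `‖X‖_γ`. -/
def curveSpace (γ : ℝ) : Submodule ℝ (lp (fun _ : Icc (0:ℝ) 1 × Icc (0:ℝ) 1 => E3) ∞) where
  carrier := {h | (∀ ξ η : Icc (0:ℝ) 1, h (ξ, ξ) - h (η, η) = |(ξ:ℝ) - η| ^ γ • h (ξ, η)) ∧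
    h (0, 0) = h (1, 1)}
  add_mem' := by
    rintro a b ⟨ha, ha'⟩ ⟨hb, hb'⟩
    refine ⟨fun ξ η => ?_, ?_⟩
    · simp only [lp.coeFn_add, Pi.add_apply, smul_add, ← ha, ← hb]; abel
    · simp only [lp.coeFn_add, Pi.add_apply, ha', hb']
  zero_mem' := by simp
  smul_mem' := by
    rintro c a ⟨ha, ha'⟩
    refine ⟨fun ξ η => ?_, ?_⟩
    · simp only [lp.coeFn_smul, Pi.smul_apply]
      rw [← smul_sub, ha, smul_comm]
    · simp only [lp.coeFn_smul, Pi.smul_apply, ha']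

lemma isClosed_curveSpace (γ : ℝ) :
    IsClosed (curveSpace γ : Set (lp (fun _ : Icc (0:ℝ) 1 × Icc (0:ℝ) 1 => E3) ∞)) := by
  have hc : ∀ i, Continuous fun h : lp (fun _ : Icc (0:ℝ) 1 × Icc (0:ℝ) 1 => E3) ∞ => h i :=
    fun i => (lp.evalCLM ℝ (fun _ : Icc (0:ℝ) 1 × Icc (0:ℝ) 1 => E3) ∞ i).continuous
  have h1 : ∀ ξ η : Icc (0:ℝ) 1, IsClosed
      {h : lp (fun _ : Icc (0:ℝ) 1 × Icc (0:ℝ) 1 => E3) ∞ |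
        h (ξ, ξ) - h (η, η) = |(ξ:ℝ) - η| ^ γ • h (ξ, η)} := fun ξ η =>
    isClosed_eq ((hc (ξ, ξ)).sub (hc (η, η))) ((continuous_const_smul (|(ξ:ℝ) - η| ^ γ)).comp (hc (ξ, η)))
  have h2 : IsClosed {h : lp (fun _ : Icc (0:ℝ) 1 × Icc (0:ℝ) 1 => E3) ∞ |
      h (0, 0) = h (1, 1)} := isClosed_eq (hc (0, 0)) (hc (1, 1))
  have h3 := (isClosed_iInter fun ξ => isClosed_iInter fun η => h1 ξ η).inter h2
  convert h3
  ext h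
  simp only [mem_inter_iff, mem_iInter, mem_ofPred_eq]
  rfl

instance (γ : ℝ) : CompleteSpace (curveSpace γ) :=
  (isClosed_curveSpace γ).completeSpace_coe

/-- Evaluation of a curve at the (projection to `[0,1]` of the) parameter `ξ`. -/
def ev (γ ξ : ℝ) : curveSpace γ →L[ℝ] E3 :=
  (lp.evalCLM ℝ (fun _ : Icc (0:ℝ) 1 × Icc (0:ℝ) 1 => E3) ∞ (proj01 ξ, proj01 ξ)).comp
    (curveSpace γ).subtypeL

lemma ev_apply (γ ξ : ℝ) (h : curveSpace γ) : ev γ ξ h = h.1 (proj01 ξ, proj01 ξ) := rfl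

lemma norm_ev_le {γ : ℝ} (h : curveSpace γ) (ξ : ℝ) : ‖ev γ ξ h‖ ≤ ‖h‖ :=
  lp.norm_apply_le_norm (by simp) h.1 _

lemma holderC_ev {γ : ℝ} (hγ : 0 ≤ γ) (h : curveSpace γ) :
    HolderC γ ‖h‖ (fun ξ => ev γ ξ h) := by
  intro s t
  simp only [ev_apply]
  rw [h.2.1, norm_smul, mul_comm, Real.norm_of_nonneg (by positivity)]
  exact mul_le_mul (lp.norm_apply_le_norm (by simp) h.1 _)
    (Real.rpow_le_rpow (abs_nonneg _) (abs_proj01_sub_le s t) hγ) (by positivity) (norm_nonneg _)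

lemma ev_closed {γ : ℝ} (h : curveSpace γ) : ev γ 0 h = ev γ 1 h := by
  have h0 : proj01 0 = 0 := proj01_of_mem (by simp)
  have h1 : proj01 1 = 1 := proj01_of_mem (by simp)
  rw [ev_apply, ev_apply, h0, h1]
  exact h.2.2

lemma norm_le_of_ev {γ M : ℝ} {h : curveSpace γ} (h0 : ∀ ξ ∈ Icc (0:ℝ) 1, ‖ev γ ξ h‖ ≤ M)
    (h1 : ∀ ξ ∈ Icc (0:ℝ) 1, ∀ η ∈ Icc (0:ℝ) 1, ‖ev γ ξ h - ev γ η h‖ ≤ M * |ξ - η| ^ γ) :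
    ‖h‖ ≤ M := by
  have hM : 0 ≤ M := (norm_nonneg _).trans (h0 0 (by simp))
  refine lp.norm_le_of_forall_le hM fun ⟨ξ, η⟩ => ?_
  by_cases e : ξ = η
  · subst e
    have := h0 ξ ξ.2
    rwa [ev_apply, proj01_of_mem ξ.2] at this
  · have := h1 ξ ξ.2 η η.2
    have hp : 0 < |(ξ:ℝ) - η| ^ γ :=
      Real.rpow_pos_of_pos (abs_pos.2 (sub_ne_zero.2 fun h => e (Subtype.ext h))) _
    rw [ev_apply, ev_apply, proj01_of_mem ξ.2, proj01_of_mem η.2, h.2.1, norm_smul, mul_comm,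
      Real.norm_of_nonneg hp.le] at this
    exact le_of_mul_le_mul_right this hp

lemma curve_ext {γ : ℝ} {h k : curveSpace γ} (e : ∀ ξ ∈ Icc (0:ℝ) 1, ev γ ξ h = ev γ ξ k) :
    h = k := by
  rw [← sub_eq_zero, ← norm_le_zero_iff]
  refine norm_le_of_ev (fun ξ hξ => ?_) fun ξ hξ η hη => ?_
  · rw [map_sub, e ξ hξ, sub_self, norm_zero]
  · rw [map_sub, map_sub, e ξ hξ, e η hη, sub_self, sub_self, sub_self, norm_zero, zero_mul]

/-- The element `h` of the Banach space encodes the curve `X`. -/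
def Encodes {γ : ℝ} (h : curveSpace γ) (X : ℝ → E3) : Prop :=
  ∀ ξ ∈ Icc (0:ℝ) 1, ev γ ξ h = X ξ

lemma exists_encodes {γ M : ℝ} (hγ : γ ≠ 0) {X : ℝ → E3}
    (h0 : ∀ ξ ∈ Icc (0:ℝ) 1, ‖X ξ‖ ≤ M)
    (h1 : ∀ ξ ∈ Icc (0:ℝ) 1, ∀ η ∈ Icc (0:ℝ) 1, ‖X ξ - X η‖ ≤ M * |ξ - η| ^ γ)
    (hc : X 0 = X 1) : ∃ h : curveSpace γ, Encodes h X := by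
  classical
  let f : Icc (0:ℝ) 1 × Icc (0:ℝ) 1 → E3 := fun p =>
    if p.1 = p.2 then X p.1 else (|(p.1:ℝ) - p.2| ^ γ)⁻¹ • (X p.1 - X p.2)
  have hp : ∀ ξ η : Icc (0:ℝ) 1, ξ ≠ η → 0 < |(ξ:ℝ) - η| ^ γ := fun ξ η e =>
    Real.rpow_pos_of_pos (abs_pos.2 (sub_ne_zero.2 fun h => e (Subtype.ext h))) _
  have hf : Memℓp f ∞ := by
    refine memℓp_infty ⟨M, ?_⟩
    rintro _ ⟨⟨ξ, η⟩, rfl⟩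
    by_cases e : ξ = η
    · simp only [f, if_pos e]
      exact h0 ξ ξ.2
    · simp only [f, if_neg e]
      rw [norm_smul, norm_inv, Real.norm_of_nonneg (hp ξ η e).le, inv_mul_le_iff₀ (hp ξ η e),
        mul_comm]
      exact h1 ξ ξ.2 η η.2
  refine ⟨⟨⟨f, hf⟩, fun ξ η => ?_, ?_⟩, fun ξ hξ => ?_⟩
  · change f (ξ, ξ) - f (η, η) = _ • f (ξ, η)
    by_cases e : ξ = η
    · subst e
      rw [sub_self, sub_self, abs_zero, Real.zero_rpow hγ, zero_smul]
    · simp only [f, if_neg e, if_true]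
      rw [smul_inv_smul₀ (hp ξ η e).ne']
  · change f (0, 0) = f (1, 1)
    simpa [f] using hc
  · rw [ev_apply, proj01_of_mem hξ]
    change f _ = _
    simp [f]

lemma Encodes.sub {γ : ℝ} {h k : curveSpace γ} {X Y : ℝ → E3} (hX : Encodes h X)
    (hY : Encodes k Y) : Encodes (h - k) (fun ξ => X ξ - Y ξ) := fun ξ hξ => by
  rw [map_sub, hX ξ hξ, hY ξ hξ]

lemma Encodes.memC {γ : ℝ} (hγ : 0 < γ) {h : curveSpace γ} {X : ℝ → E3} (hX : Encodes h X) :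
    MemC γ X := by
  have hH : ∀ s ∈ Icc (0:ℝ) 1, ∀ t ∈ Icc (0:ℝ) 1, ‖X s - X t‖ ≤ ‖h‖ * |s - t| ^ γ := by
    intro s hs t ht
    rw [← hX s hs, ← hX t ht]
    exact holderC_ev hγ.le h s t
  refine ⟨⟨fun t ht => ?_, ?_⟩, ‖h‖, hH⟩
  · rw [ContinuousWithinAt, tendsto_iff_norm_sub_tendsto_zero]
    have hl : Tendsto (fun s : ℝ => ‖h‖ * |s - t| ^ γ) (𝓝[Icc 0 1] t) (𝓝 0) := by
      have hcont : ContinuousAt (fun s : ℝ => ‖h‖ * |s - t| ^ γ) t := by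
        refine continuousAt_const.mul (ContinuousAt.rpow_const ?_ (Or.inr hγ.le))
        fun_prop
      have := hcont.tendsto
      simp only [sub_self, abs_zero, Real.zero_rpow hγ.ne', mul_zero] at this
      exact this.mono_left nhdsWithin_le_nhds
    refine squeeze_zero' (Eventually.of_forall fun _ => norm_nonneg _) ?_ hl
    filter_upwards [self_mem_nhdsWithin] with s hs using hH s hs t ht
  · rw [← hX 0 (by simp), ← hX 1 (by simp), ev_closed]

lemma sNorm_nonneg (X : ℝ → E3) : 0 ≤ sNorm X := by
  refine Real.sSup_nonneg ?_
  rintro _ ⟨s, _, rfl⟩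
  exact norm_nonneg _

lemma hSemi_nonneg (γ : ℝ) (X : ℝ → E3) : 0 ≤ hSemi γ X := by
  refine Real.sSup_nonneg ?_
  rintro _ ⟨s, _, t, _, _, rfl⟩
  positivity

lemma MemC.norm_le {γ : ℝ} {X : ℝ → E3} (hX : MemC γ X) {s : ℝ} (hs : s ∈ Icc (0:ℝ) 1) :
    ‖X s‖ ≤ hStar γ X := by
  have hb : BddAbove {r | ∃ s ∈ Icc (0:ℝ) 1, r = ‖X s‖} := by
    obtain ⟨C, hC⟩ := isCompact_Icc.exists_bound_of_continuousOn hX.1.1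
    refine ⟨C, ?_⟩
    rintro _ ⟨s, hs, rfl⟩
    exact hC s hs
  have : ‖X s‖ ≤ sNorm X := le_csSup hb ⟨s, hs, rfl⟩
  linarith [hSemi_nonneg γ X, show hStar γ X = sNorm X + hSemi γ X from rfl]

lemma MemC.holder_le {γ : ℝ} {X : ℝ → E3} (hX : MemC γ X) {s t : ℝ}
    (hs : s ∈ Icc (0:ℝ) 1) (ht : t ∈ Icc (0:ℝ) 1) :
    ‖X s - X t‖ ≤ hStar γ X * |s - t| ^ γ := by
  have h0 : 0 ≤ hStar γ X := add_nonneg (sNorm_nonneg X) (hSemi_nonneg γ X)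
  rcases eq_or_ne s t with rfl | e
  · rw [sub_self, norm_zero]; positivity
  have hp : ∀ {s t : ℝ}, s ≠ t → 0 < |s - t| ^ γ := fun e =>
    Real.rpow_pos_of_pos (abs_pos.2 (sub_ne_zero.2 e)) _
  have hb : BddAbove {r | ∃ s ∈ Icc (0:ℝ) 1, ∃ t ∈ Icc (0:ℝ) 1, s ≠ t ∧
      r = ‖X s - X t‖ / |s - t| ^ γ} := by
    obtain ⟨C, hC⟩ := hX.2
    refine ⟨C, ?_⟩
    rintro _ ⟨s, hs, t, ht, e, rfl⟩
    exact (div_le_iff₀ (hp e)).2 (hC s hs t ht)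
  have : ‖X s - X t‖ / |s - t| ^ γ ≤ hSemi γ X := le_csSup hb ⟨s, hs, t, ht, e, rfl⟩
  rw [← div_le_iff₀ (hp e)]
  linarith [sNorm_nonneg X, show hStar γ X = sNorm X + hSemi γ X from rfl]

lemma MemC.exists_encodes {γ : ℝ} (hγ : 0 < γ) {X : ℝ → E3} (hX : MemC γ X) :
    ∃ h : curveSpace γ, Encodes h X :=
  _root_.exists_encodes hγ.ne' (fun _ hξ => hX.norm_le hξ) (fun _ hξ _ hη => hX.holder_le hξ hη)
    hX.1.2

lemma Encodes.norm_le_hStar {γ : ℝ} (hγ : 0 < γ) {h : curveSpace γ} {X : ℝ → E3}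
    (hX : Encodes h X) : ‖h‖ ≤ hStar γ X := by
  refine norm_le_of_ev (fun ξ hξ => ?_) fun ξ hξ η hη => ?_
  · rw [hX ξ hξ]; exact (hX.memC hγ).norm_le hξ
  · rw [hX ξ hξ, hX η hη]; exact (hX.memC hγ).holder_le hξ hη

lemma Encodes.hStar_le {γ : ℝ} (hγ : 0 < γ) {h : curveSpace γ} {X : ℝ → E3}
    (hX : Encodes h X) : hStar γ X ≤ 2 * ‖h‖ := by
  have h1 : sNorm X ≤ ‖h‖ := by
    refine Real.sSup_le ?_ (norm_nonneg _)
    rintro _ ⟨s, hs, rfl⟩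
    rw [← hX s hs]
    exact norm_ev_le h s
  have h2 : hSemi γ X ≤ ‖h‖ := by
    refine Real.sSup_le ?_ (norm_nonneg _)
    rintro _ ⟨s, hs, t, ht, e, rfl⟩
    rw [← hX s hs, ← hX t ht,
      div_le_iff₀ (Real.rpow_pos_of_pos (abs_pos.2 (sub_ne_zero.2 e)) _)]
    exact holderC_ev hγ.le h s t
  linarith [show hStar γ X = sNorm X + hSemi γ X from rfl]

/-! ### The vector field and its trajectories -/

lemma HolderC.mono {F : Type*} [NormedAddCommGroup F] {γ C D : ℝ} {f : ℝ → F}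
    (hf : HolderC γ C f) (h : C ≤ D) : HolderC γ D f := fun s t =>
  (hf s t).trans (by gcongr)

/-- Bound of the vector field on the ball of radius `R`. -/
def velBound (γ K R : ℝ) : ℝ := youngC γ * K * (R ^ 2 + R ^ 3)

/-- Lipschitz constant of the vector field on the ball of radius `R`. -/
def velLip (γ K R : ℝ) : ℝ := youngC γ * K * (2 * R ^ 3 + 5 * R ^ 2 + 2 * R)

lemma velBound_nonneg {γ K R : ℝ} (hγ : 1 / 2 < γ) (hK : 0 ≤ K) (hR : 0 ≤ R) :
    0 ≤ velBound γ K R := by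
  have := youngC_pos hγ
  unfold velBound; positivity

lemma velLip_nonneg {γ K R : ℝ} (hγ : 1 / 2 < γ) (hK : 0 ≤ K) (hR : 0 ≤ R) :
    0 ≤ velLip γ K R := by
  have := youngC_pos hγ
  unfold velLip; positivity

section Field

variable {A : E3 → M3} {K γ : ℝ}

lemma exists_velMap (hγ : 1 / 2 < γ) (hA : KernelBound A K) (h : curveSpace γ) :
    ∃ k : curveSpace γ, Encodes k (vel A fun ξ => ev γ ξ h) := by
  have hγ0 : 0 < γ := by linarith
  have hκ := youngC_pos hγ
  have hK := hA.nonneg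
  have hH := holderC_ev hγ0.le h
  refine exists_encodes hγ0.ne' (M := velBound γ K ‖h‖) (fun ξ _ => ?_) (fun ξ _ η _ => ?_) ?_
  · refine (hA.norm_vel_le hγ hH (ev_closed h) ξ).trans ?_
    have : 0 ≤ youngC γ * K * ‖h‖ ^ 3 := by positivity
    unfold velBound
    linarith
  · refine (hA.norm_vel_sub_le hγ hH (ev_closed h) ξ η).trans ?_
    have : 0 ≤ ‖h‖ ^ 2 := by positivity
    unfold velBound
    gcongr
    linarith
  · simp only [vel, ev_closed h]

/-- The vector field `Z ↦ V^Z(Z)` on `𝒞^γ`. -/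
def velMap (hγ : 1 / 2 < γ) (hA : KernelBound A K) (h : curveSpace γ) : curveSpace γ :=
  (exists_velMap hγ hA h).choose

lemma ev_velMap (hγ : 1 / 2 < γ) (hA : KernelBound A K) (h : curveSpace γ) {ξ : ℝ}
    (hξ : ξ ∈ Icc (0:ℝ) 1) : ev γ ξ (velMap hγ hA h) = vel A (fun ξ => ev γ ξ h) ξ :=
  (exists_velMap hγ hA h).choose_spec ξ hξ

lemma norm_velMap_le (hγ : 1 / 2 < γ) (hA : KernelBound A K) {h : curveSpace γ} {R : ℝ}
    (hR : ‖h‖ ≤ R) : ‖velMap hγ hA h‖ ≤ velBound γ K R := by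
  have hγ0 : 0 < γ := by linarith
  have hκ := youngC_pos hγ
  have hK := hA.nonneg
  have hR0 : 0 ≤ R := (norm_nonneg h).trans hR
  have hH := (holderC_ev hγ0.le h).mono hR
  refine norm_le_of_ev (fun ξ hξ => ?_) fun ξ hξ η hη => ?_
  · rw [ev_velMap hγ hA h hξ]
    refine (hA.norm_vel_le hγ hH (ev_closed h) ξ).trans ?_
    have : 0 ≤ youngC γ * K * R ^ 3 := by positivity
    unfold velBound
    linarith
  · rw [ev_velMap hγ hA h hξ, ev_velMap hγ hA h hη]
    refine (hA.norm_vel_sub_le hγ hH (ev_closed h) ξ η).trans ?_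
    have : 0 ≤ R ^ 2 := by positivity
    unfold velBound
    gcongr
    linarith

lemma norm_velMap_sub_le (hγ : 1 / 2 < γ) (hA : KernelBound A K) {h k : curveSpace γ} {R : ℝ}
    (hh : ‖h‖ ≤ R) (hk : ‖k‖ ≤ R) :
    ‖velMap hγ hA h - velMap hγ hA k‖ ≤ velLip γ K R * ‖h - k‖ := by
  have hγ0 : 0 < γ := by linarith
  have hκ := youngC_pos hγ
  have hK := hA.nonneg
  have hR0 : 0 ≤ R := (norm_nonneg h).trans hh
  have h1 := (holderC_ev hγ0.le h).mono hh
  have h2 := (holderC_ev hγ0.le k).mono hk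
  have hd : ∀ ξ, ‖ev γ ξ h - ev γ ξ k‖ ≤ ‖h - k‖ := fun ξ => by
    rw [← map_sub]; exact norm_ev_le _ _
  have hD : HolderC γ ‖h - k‖ (fun ξ => ev γ ξ h - ev γ ξ k) := by
    simp only [← map_sub]; exact holderC_ev hγ0.le _
  have p1 : 0 ≤ youngC γ * K * R * ‖h - k‖ := by positivity
  have p2 : 0 ≤ youngC γ * K * R ^ 2 * ‖h - k‖ := by positivity
  have p3 : 0 ≤ youngC γ * K * R ^ 3 * ‖h - k‖ := by positivity
  refine norm_le_of_ev (fun ξ hξ => ?_) fun ξ hξ η hη => ?_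
  · rw [map_sub, ev_velMap hγ hA h hξ, ev_velMap hγ hA k hξ]
    refine (hA.norm_vel_sub_vel_le hγ h1 h2 (ev_closed h) (ev_closed k) hD hd ξ).trans ?_
    unfold velLip
    linarith
  · rw [map_sub, map_sub, ev_velMap hγ hA h hξ, ev_velMap hγ hA k hξ, ev_velMap hγ hA h hη,
      ev_velMap hγ hA k hη]
    refine (hA.norm_vel_sub_vel_sub_le hγ h1 h2 (ev_closed h) (ev_closed k) hD hd ξ η).trans ?_
    have : youngC γ * K * (2 * R ^ 3 + 3 * R ^ 2) * ‖h - k‖ ≤ velLip γ K R * ‖h - k‖ := by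
      unfold velLip
      linarith
    gcongr

lemma lipschitzOnWith_velMap (hγ : 1 / 2 < γ) (hA : KernelBound A K) {R : ℝ} (hR : 0 ≤ R) :
    LipschitzOnWith (velLip γ K R).toNNReal (velMap hγ hA) (Metric.closedBall 0 R) := by
  refine LipschitzOnWith.of_dist_le_mul fun h hh k hk => ?_
  rw [Real.coe_toNNReal _ (velLip_nonneg hγ hA.nonneg hR), dist_eq_norm, dist_eq_norm]
  exact norm_velMap_sub_le hγ hA (mem_closedBall_zero_iff.1 hh) (mem_closedBall_zero_iff.1 hk)

lemma continuous_velMap (hγ : 1 / 2 < γ) (hA : KernelBound A K) : Continuous (velMap hγ hA) := by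
  refine continuous_iff_continuousAt.2 fun h => ?_
  refine (lipschitzOnWith_velMap hγ hA (R := ‖h‖ + 1) (by positivity)).continuousOn.continuousAt ?_
  refine mem_of_superset (Metric.ball_mem_nhds h one_pos) fun k hk => ?_
  rw [mem_closedBall_zero_iff]
  have := norm_le_norm_add_norm_sub h k
  rw [Metric.mem_ball, dist_eq_norm, norm_sub_rev] at hk
  linarith

/-- `y` is a trajectory on `[0,T]` of the vector field `Z ↦ V^Z(Z)` issued from `x`, in integral
form. -/
structure IsTraj (hγ : 1 / 2 < γ) (hA : KernelBound A K) (T : ℝ) (x : curveSpace γ)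
    (y : ℝ → curveSpace γ) : Prop where
  cont : ContinuousOn y (Icc 0 T)
  eq : ∀ t ∈ Icc 0 T, y t = x + ∫ s in (0:ℝ)..t, velMap hγ hA (y s)

variable {hγ : 1 / 2 < γ} {hA : KernelBound A K} {T : ℝ} {x : curveSpace γ}
  {y : ℝ → curveSpace γ}

lemma IsTraj.intervalIntegrable (h : IsTraj hγ hA T x y) {t : ℝ} (ht : t ∈ Icc 0 T) :
    IntervalIntegrable (fun s => velMap hγ hA (y s)) volume 0 t := by
  refine ContinuousOn.intervalIntegrable ?_
  rw [uIcc_of_le ht.1]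
  exact (continuous_velMap hγ hA).comp_continuousOn (h.cont.mono (Icc_subset_Icc_right ht.2))

lemma IsTraj.hasDerivWithinAt (h : IsTraj hγ hA T x y) {t : ℝ} (ht : t ∈ Ico 0 T) :
    HasDerivWithinAt y (velMap hγ hA (y t)) (Ici t) t := by
  have hT : 0 ≤ T := ht.1.trans ht.2.le
  have ht' : t ∈ Icc 0 T := ⟨ht.1, ht.2.le⟩
  have h1 := ODE.hasDerivWithinAt_picard_Icc (f := fun _ => velMap hγ hA) (u := univ)
    (left_mem_Icc.2 hT) (((continuous_velMap hγ hA).comp continuous_snd).continuousOn) h.cont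
    (fun _ _ => mem_univ _) x ht'
  have h2 : HasDerivWithinAt y (velMap hγ hA (y t)) (Icc 0 T) t :=
    h1.congr (fun s hs => h.eq s hs) (h.eq t ht')
  exact h2.mono_of_mem_nhdsWithin (mem_of_superset (Icc_mem_nhdsGE ht.2)
    (Icc_subset_Icc_left ht.1))

lemma IsTraj.apply_zero (h : IsTraj hγ hA T x y) (hT : 0 ≤ T) : y 0 = x := by
  rw [h.eq 0 (left_mem_Icc.2 hT), intervalIntegral.integral_same, add_zero]

lemma IsTraj.exists_bound (h : IsTraj hγ hA T x y) :
    ∃ R, 0 ≤ R ∧ ∀ t ∈ Icc 0 T, ‖y t‖ ≤ R := by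
  obtain ⟨C, hC⟩ := isCompact_Icc.exists_bound_of_continuousOn h.cont
  exact ⟨max C 0, le_max_right _ _, fun t ht => (hC t ht).trans (le_max_left _ _)⟩

/-- Gronwall's estimate for two trajectories in a common ball. -/
lemma IsTraj.norm_sub_le (h : IsTraj hγ hA T x y) {x' : curveSpace γ} {y' : ℝ → curveSpace γ}
    (h' : IsTraj hγ hA T x' y') {R : ℝ} (hR : 0 ≤ R) (hy : ∀ t ∈ Icc 0 T, ‖y t‖ ≤ R)
    (hy' : ∀ t ∈ Icc 0 T, ‖y' t‖ ≤ R) {t : ℝ} (ht : t ∈ Icc 0 T) :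
    ‖y t - y' t‖ ≤ ‖x - x'‖ * Real.exp (velLip γ K R * T) := by
  have hT : 0 ≤ T := ht.1.trans ht.2
  have := dist_le_of_trajectories_ODE_of_mem (v := fun _ => velMap hγ hA)
    (s := fun _ => Metric.closedBall 0 R) (δ := ‖x - x'‖)
    (fun _ _ => lipschitzOnWith_velMap hγ hA hR) h.cont (fun _ => h.hasDerivWithinAt)
    (fun t ht => mem_closedBall_zero_iff.2 (hy t ⟨ht.1, ht.2.le⟩)) h'.cont
    (fun _ => h'.hasDerivWithinAt)
    (fun t ht => mem_closedBall_zero_iff.2 (hy' t ⟨ht.1, ht.2.le⟩))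
    (by rw [h.apply_zero hT, h'.apply_zero hT, dist_eq_norm]) t ht
  have hL := velLip_nonneg hγ hA.nonneg hR
  rw [dist_eq_norm, Real.coe_toNNReal _ hL, sub_zero] at this
  refine this.trans ?_
  gcongr
  exact ht.2

lemma IsTraj.unique (h : IsTraj hγ hA T x y) {y' : ℝ → curveSpace γ}
    (h' : IsTraj hγ hA T x y') {t : ℝ} (ht : t ∈ Icc 0 T) : y t = y' t := by
  obtain ⟨R, hR, hy⟩ := h.exists_bound
  obtain ⟨R', hR', hy'⟩ := h'.exists_bound
  have := h.norm_sub_le h' (R := R + R') (by positivity)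
    (fun t ht => (hy t ht).trans (by linarith)) (fun t ht => (hy' t ht).trans (by linarith)) ht
  rwa [sub_self, norm_zero, zero_mul, norm_le_zero_iff, sub_eq_zero] at this

/-- Existence for a time depending only on the radius `r`; the trajectory stays in the ball of
radius `r + 1`. -/
lemma exists_isTraj (hγ : 1 / 2 < γ) (hA : KernelBound A K) {r : ℝ} (hr : 0 ≤ r) (hT : 0 ≤ T)
    (hTB : velBound γ K (r + 1) * T ≤ 1) (hx : ‖x‖ ≤ r) :
    ∃ y, IsTraj hγ hA T x y ∧ ∀ t, ‖y t‖ ≤ r + 1 := by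
  have hB := velBound_nonneg hγ hA.nonneg (by positivity : 0 ≤ r + 1)
  have hp : IsPicardLindelof (fun _ => velMap hγ hA) (tmin := 0) (tmax := T)
      ⟨0, left_mem_Icc.2 hT⟩ (0 : curveSpace γ) (r + 1).toNNReal r.toNNReal
      (velBound γ K (r + 1)).toNNReal (velLip γ K (r + 1)).toNNReal := by
    refine IsPicardLindelof.of_time_independent (fun h hh => ?_) ?_ ?_
    · rw [Real.coe_toNNReal _ (by positivity)] at hh
      rw [Real.coe_toNNReal _ hB]
      exact norm_velMap_le hγ hA (mem_closedBall_zero_iff.1 hh)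
    · rw [Real.coe_toNNReal _ (by positivity)]
      exact lipschitzOnWith_velMap hγ hA (by positivity)
    · rw [Real.coe_toNNReal _ (by positivity : 0 ≤ r + 1), Real.coe_toNNReal _ hr,
        Real.coe_toNNReal _ hB]
      simpa [hT] using hTB
  have hx' : x ∈ Metric.closedBall (0 : curveSpace γ) r.toNNReal := by
    rwa [Real.coe_toNNReal _ hr, mem_closedBall_zero_iff]
  obtain ⟨α, hα⟩ := ODE.FunSpace.exists_isFixedPt_next hp hx'
  rw [ODE.FunSpace.isFixedPt_next_iff] at hα
  refine ⟨α.compProj, ⟨α.continuous_compProj.continuousOn, fun t ht => ?_⟩, fun t => ?_⟩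
  · rw [ODE.FunSpace.compProj_of_mem ht, hα]
    rfl
  · have := ODE.FunSpace.compProj_mem_closedBall hp.mul_max_le (α := α) (t := t)
    rwa [Real.coe_toNNReal _ (by positivity), mem_closedBall_zero_iff] at this

end Field

/-! ### Solutions in the Young sense and trajectories -/

/-- A velocity field in the sense of `IsYoungVelocity`, evaluated along the curve, is `vel`. -/
lemma Encodes.vel_eq {A : E3 → M3} {γ : ℝ} {h : curveSpace γ} {Z : ℝ → E3} (hZ : Encodes h Z)
    {V : E3 → E3} (hV : IsYoungVelocity A Z V) {ξ : ℝ} (hξ : ξ ∈ Icc (0:ℝ) 1) :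
    vel A (fun ξ => ev γ ξ h) ξ = V (Z ξ) := by
  refine RSLimit.eq_young ?_
  have e : ptnSum (fun ρ => A (ev γ ξ h - ev γ ρ h)) (fun ξ => ev γ ξ h) =
      fun P => youngRS A Z (Z ξ) P := by
    funext P
    refine Finset.sum_congr rfl fun i hi => ?_
    have hi := Finset.mem_range.1 hi
    simp only [hZ ξ hξ, hZ _ (P.mem_Icc hi.le), hZ _ (P.mem_Icc (Nat.succ_le_of_lt hi))]
  have := hV (Z ξ)
  rwa [← e] at this

/-- Every solution in `C([0,T], 𝒞^γ)` of the vortex filament equation is a trajectory in the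
Banach space `𝒞^γ`. -/
lemma IsYoungSolution.exists_isTraj {A : E3 → M3} {K γ T : ℝ} (hγ : 1 / 2 < γ)
    (hA : KernelBound A K) {X : ℝ → E3} {Y : ℝ → ℝ → E3} (hY : MemXT γ T Y)
    (hS : IsYoungSolution T A X Y) {x : curveSpace γ} (hx : Encodes x X) :
    ∃ y, IsTraj hγ hA T x y ∧ ∀ t ∈ Icc 0 T, Encodes (y t) (Y t) := by
  have hγ0 : 0 < γ := by linarith
  have hex : ∀ t, ∃ h : curveSpace γ, t ∈ Icc 0 T → Encodes h (Y t) := fun t => by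
    by_cases ht : t ∈ Icc 0 T
    · obtain ⟨h, hh⟩ := (hY.1 t ht).exists_encodes hγ0
      exact ⟨h, fun _ => hh⟩
    · exact ⟨0, fun h => absurd h ht⟩
  choose y hy using hex
  have hcont : ContinuousOn y (Icc 0 T) := by
    refine Metric.continuousOn_iff.2 fun t ht ε hε => ?_
    obtain ⟨δ, hδ, h⟩ := hY.2 t ht (ε / 2) (by positivity)
    refine ⟨δ, hδ, fun s hs hst => ?_⟩
    rw [dist_eq_norm]
    have h1 := ((hy s hs).sub (hy t ht)).norm_le_hStar hγ0
    have h2 := h s hs hst.le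
    linarith
  obtain ⟨v, hv, hE⟩ := hS
  refine ⟨y, ⟨hcont, fun t ht => curve_ext fun ξ hξ => ?_⟩, hy⟩
  have hI : IntervalIntegrable (fun s => velMap hγ hA (y s)) volume 0 t := by
    refine ContinuousOn.intervalIntegrable ?_
    rw [uIcc_of_le ht.1]
    exact (continuous_velMap hγ hA).comp_continuousOn (hcont.mono (Icc_subset_Icc_right ht.2))
  rw [map_add, ← ContinuousLinearMap.intervalIntegral_comp_comm _ hI, hy t ht ξ hξ, hx ξ hξ,
    hE t ht ξ hξ]
  congr 1
  refine intervalIntegral.integral_congr fun s hs => ?_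
  rw [uIcc_of_le ht.1] at hs
  have hs' : s ∈ Icc 0 T := ⟨hs.1, hs.2.trans ht.2⟩
  rw [ev_velMap hγ hA _ hξ, (hy s hs').vel_eq (hv s hs') hξ]

lemma KernelBound.isYoungVelocity {A : E3 → M3} {K γ R : ℝ} (hγ : 1 / 2 < γ)
    (hA : KernelBound A K) {Z : ℝ → E3} (hZ : HolderC γ R Z) :
    IsYoungVelocity A Z (fun p => young (fun ρ => A (p - Z ρ)) Z) := fun p => by
  have h := rsLimit_young hγ (hA.holder_comp hZ p) hZ
  have e : ptnSum (fun ρ => A (p - Z ρ)) Z = fun P => youngRS A Z p P := by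
    funext P
    rfl
  rwa [e] at h

/-- Conversely, a trajectory in the Banach space solves the vortex filament equation. -/
lemma IsTraj.isYoungSolution {A : E3 → M3} {K γ T : ℝ} {hγ : 1 / 2 < γ}
    {hA : KernelBound A K} {x : curveSpace γ} {y : ℝ → curveSpace γ} (h : IsTraj hγ hA T x y)
    {X : ℝ → E3} (hx : Encodes x X) : IsYoungSolution T A X (fun t ξ => ev γ ξ (y t)) := by
  have hγ0 : 0 < γ := by linarith
  refine ⟨fun s p => young (fun ρ => A (p - ev γ ρ (y s))) (fun ξ => ev γ ξ (y s)),
    fun s _ => hA.isYoungVelocity hγ (holderC_ev hγ0.le (y s)), fun t ht ξ hξ => ?_⟩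
  have e := congrArg (ev γ ξ) (h.eq t ht)
  rw [map_add, ← ContinuousLinearMap.intervalIntegral_comp_comm _ (h.intervalIntegrable ht),
    hx ξ hξ] at e
  refine e.trans (congrArg (X ξ + ·) ?_)
  refine intervalIntegral.integral_congr fun s _ => ?_
  exact ev_velMap hγ hA _ hξ

lemma IsTraj.memXT {A : E3 → M3} {K γ T : ℝ} {hγ : 1 / 2 < γ}
    {hA : KernelBound A K} {x : curveSpace γ} {y : ℝ → curveSpace γ} (h : IsTraj hγ hA T x y) :
    MemXT γ T (fun t ξ => ev γ ξ (y t)) := by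
  have hγ0 : 0 < γ := by linarith
  have he : ∀ t, Encodes (y t) (fun ξ => ev γ ξ (y t)) := fun _ _ _ => rfl
  refine ⟨fun t _ => (he t).memC hγ0, fun t ht ε hε => ?_⟩
  obtain ⟨δ, hδ, hc⟩ := Metric.continuousOn_iff.1 h.cont t ht (ε / 2) (by positivity)
  refine ⟨δ / 2, by positivity, fun s hs hst => ?_⟩
  have h1 := hc s hs (by rw [Real.dist_eq]; linarith)
  have h2 := ((he s).sub (he t)).hStar_le hγ0
  rw [dist_eq_norm] at h1
  linarith

/-- Lipschitz dependence on the initial condition, Young case. Let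
`1/2 < γ ≤ 1`, `‖∇A‖_2 < ∞` and `r > 0`. There is a common existence time `T₀ = T₀(r) > 0`
for initial conditions in the ball `ℬ(𝒞^γ; r)` and a constant `L` such that the solution map
`Γ` satisfies `‖Γ(X) - Γ(X̃)‖_{𝐗_{T₀}} ≤ L ‖X - X̃‖_γ^*` for all `X, X̃ ∈ ℬ(𝒞^γ; r)`. -/
theorem statement_8 (γ : ℝ) (hγ : 1 / 2 < γ) (hγ1 : γ ≤ 1)
    (A : E3 → M3) (hA : NablaBdd 1 2 A) (r : ℝ) (hr : 0 < r) :
    ∃ T0 : ℝ, 0 < T0 ∧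
      (∀ X : ℝ → E3, MemC γ X → hStar γ X < r →
        ∃ Y : ℝ → ℝ → E3, MemXT γ T0 Y ∧
          BddAbove {ρ : ℝ | ∃ t ∈ Icc 0 T0, ρ = hStar γ (Y t)} ∧
          IsYoungSolution T0 A X Y) ∧
      ∃ L : ℝ,
        ∀ X Xt : ℝ → E3, MemC γ X → MemC γ Xt →
          hStar γ X < r → hStar γ Xt < r →
          ∀ Y Yt : ℝ → ℝ → E3,
            MemXT γ T0 Y → MemXT γ T0 Yt →
            BddAbove {ρ : ℝ | ∃ t ∈ Icc 0 T0, ρ = hStar γ (Y t)} →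
            BddAbove {ρ : ℝ | ∃ t ∈ Icc 0 T0, ρ = hStar γ (Yt t)} →
            IsYoungSolution T0 A X Y → IsYoungSolution T0 A Xt Yt →
            xnorm γ T0 (fun t ξ => Y t ξ - Yt t ξ) ≤
              L * hStar γ (fun ξ => X ξ - Xt ξ) := by
  obtain ⟨K, hK⟩ := hA.exists_kernelBound
  have hγ0 : 0 < γ := by linarith
  have hB := velBound_nonneg hγ hK.nonneg (by positivity : 0 ≤ r + 1)
  -- The time `1 / (B + 1)` is too short to leave the ball of radius `r + 1` at speed `B`.
  obtain ⟨T, hT, hTB⟩ : ∃ T : ℝ, 0 < T ∧ velBound γ K (r + 1) * T ≤ 1 := by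
    refine ⟨1 / (velBound γ K (r + 1) + 1), by positivity, ?_⟩
    rw [mul_one_div, div_le_one (by positivity)]
    linarith
  refine ⟨T, hT, fun X hX hXr => ?_, 2 * Real.exp (velLip γ K (r + 1) * T), ?_⟩
  · obtain ⟨x, hx⟩ := hX.exists_encodes hγ0
    obtain ⟨y, hy, hyr⟩ := exists_isTraj hγ hK hr.le hT.le hTB
      ((hx.norm_le_hStar hγ0).trans hXr.le)
    refine ⟨_, hy.memXT, ⟨2 * (r + 1), ?_⟩, hy.isYoungSolution hx⟩
    rintro _ ⟨t, _, rfl⟩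
    have := Encodes.hStar_le hγ0 (h := y t) (X := fun ξ => ev γ ξ (y t)) fun _ _ => rfl
    linarith [hyr t]
  · intro X Xt hX hXt hXr hXtr Y Yt hY hYt _ _ hS hSt
    obtain ⟨x, hx⟩ := hX.exists_encodes hγ0
    obtain ⟨x', hx'⟩ := hXt.exists_encodes hγ0
    obtain ⟨y, hy, hyY⟩ := hS.exists_isTraj hγ hK hY hx
    obtain ⟨y', hy', hyY'⟩ := hSt.exists_isTraj hγ hK hYt hx'
    -- By uniqueness, each solution coincides with the one that stays in the ball of radius `r + 1`.
    obtain ⟨z, hz, hzr⟩ := exists_isTraj hγ hK hr.le hT.le hTB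
      ((hx.norm_le_hStar hγ0).trans hXr.le)
    obtain ⟨z', hz', hzr'⟩ := exists_isTraj hγ hK hr.le hT.le hTB
      ((hx'.norm_le_hStar hγ0).trans hXtr.le)
    refine csSup_le ⟨_, 0, left_mem_Icc.2 hT.le, rfl⟩ ?_
    rintro _ ⟨t, ht, rfl⟩
    calc _ ≤ 2 * ‖y t - y' t‖ := ((hyY t ht).sub (hyY' t ht)).hStar_le hγ0
      _ ≤ 2 * (‖x - x'‖ * Real.exp (velLip γ K (r + 1) * T)) := by
        gcongr
        exact hy.norm_sub_le hy' (by positivity) (fun s hs => hy.unique hz hs ▸ hzr s)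
          (fun s hs => hy'.unique hz' hs ▸ hzr' s) ht
      _ ≤ 2 * (hStar γ (fun ξ => X ξ - Xt ξ) * Real.exp (velLip γ K (r + 1) * T)) := by
        gcongr
        exact (hx.sub hx').norm_le_hStar hγ0
      _ = _ := by ring

end
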